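/- Let f be a multicritical circle map with irrational rotation number, with a chosen critical point c_0, return times q_n, and intervals I_n = I_n(c_0), I_n^j = f^j(I_n(c_0)). There exists a constant C_4 > 1 depending only on f such that for all n ≥ 1 and for any two intervals I, J taken from the six intervals I_n, I_{n+1}, I_n^{q_n}, I_n^{q_{n+1}}, I_{n+1}^{q_n}, I_n^{q_{n+1}−q_n}, one has C_4^{−1} ≤ |I|/|J| ≤ C_4. -/

import Mathlib

open Set Filter MeasureTheory

noncomputable section

/-- The Schwarzian derivative `Sf = (f''/f')' - (1/2) (f''/f')^2`. -/
def schwarzianDeriv (f : ℝ → ℝ) (x : ℝ) : ℝ :=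
  deriv (fun y => deriv (deriv f) y / deriv f y) x
    - (1 / 2) * (deriv (deriv f) x / deriv f x) ^ 2

/-- A multicritical circle map, described through its lift `F : ℝ → ℝ` to the real line.
It is an orientation-preserving `C^3` circle homeomorphism with finitely many critical
points `c 0, …, c (N-1)`, each of non-flat power-law type: near `c i` the derivative is
pinched between two multiples of `|x - c i| ^ (s i - 1)` with `s i > 1`, the Schwarzian
derivative is negative on a punctured neighborhood of each critical point, and
`log (F')` has bounded variation (bounded by `v`) off the critical neighborhoods. -/
structure MCM where
  /-- the lift of the circle map -/
  F : ℝ → ℝ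
  smooth : ContDiff ℝ 3 F
  mono : StrictMono F
  deg1 : ∀ x, F (x + 1) = F x + 1
  /-- number of critical points -/
  N : ℕ
  N_pos : 0 < N
  /-- the critical points (one representative in `[0,1)` for each) -/
  c : Fin N → ℝ
  c_mem : ∀ i, c i ∈ Set.Ico (0 : ℝ) 1
  c_inj : Function.Injective c
  isCrit : ∀ i, deriv F (c i) = 0
  critOnly : ∀ x, deriv F x = 0 → ∃ (i : Fin N) (k : ℤ), x = c i + (k : ℝ)
  /-- neighborhoods of the critical points -/
  W : Fin N → Set ℝ
  W_open : ∀ i, IsOpen (W i)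
  c_mem_W : ∀ i, c i ∈ W i
  /-- the criticalities (power-law exponents) -/
  s : Fin N → ℝ
  s_gt_one : ∀ i, 1 < s i
  al : Fin N → ℝ
  be : Fin N → ℝ
  al_pos : ∀ i, 0 < al i
  al_lt_be : ∀ i, al i < be i
  powerLaw : ∀ i, ∀ x ∈ W i, x ≠ c i →
    al i * |x - c i| ^ (s i - 1) < deriv F x ∧
      deriv F x < be i * |x - c i| ^ (s i - 1)
  negSchwarzian : ∀ i, ∀ x ∈ W i, x ≠ c i → schwarzianDeriv F x < 0
  /-- bound for the variation of `log DF` off the critical neighborhoods -/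
  v : ℝ
  v_pos : 0 < v
  logDF_var : eVariationOn (fun x => Real.log (deriv F x))
      (Set.Icc 0 1 \ ⋃ (i) (k : ℤ), (fun y => y + (k : ℝ)) '' W i) ≤ ENNReal.ofReal v

/-- The circle map with lift `F` has rotation number `ρ`. -/
def HasRotationNumber (F : ℝ → ℝ) (ρ : ℝ) : Prop :=
  Tendsto (fun n : ℕ => F^[n] 0 / n) atTop (nhds ρ)

/-- The Gauss map `x ↦ {1/x}`. -/
def gaussMap (x : ℝ) : ℝ := Int.fract x⁻¹

/-- Partial quotients `a_n` of the continued fraction expansion of `ρ ∈ (0,1)`. -/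
def cfDigit (ρ : ℝ) (n : ℕ) : ℕ := (⌊(gaussMap^[n] ρ)⁻¹⌋).toNat

/-- Return times: the denominators `q_n` of the convergents of `ρ`,
`q_0 = 1`, `q_1 = a_0`, `q_{n+1} = a_n q_n + q_{n-1}`. -/
def qDen (ρ : ℝ) : ℕ → ℕ
  | 0 => 1
  | 1 => cfDigit ρ 0
  | n + 2 => cfDigit ρ (n + 1) * qDen ρ (n + 1) + qDen ρ n

/-- Numerators `p_n` of the convergents of `ρ`:
`p_0 = 0`, `p_1 = 1`, `p_{n+1} = a_n p_n + p_{n-1}`. -/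
def pNum (ρ : ℝ) : ℕ → ℕ
  | 0 => 0
  | 1 => 1
  | n + 2 => cfDigit ρ (n + 1) * pNum ρ (n + 1) + pNum ρ n

/-- The lift of the atom `I_ℓ^j(x) = f^j(I_ℓ(x))`, where `I_ℓ(x)` is the interval with
endpoints `x` and `f^{q_ℓ}(x)`; the lift of `f^{q_ℓ}(x)` adjacent to `x` is
`F^[q_ℓ] x - p_ℓ`. -/
def atomSet (F : ℝ → ℝ) (ρ x : ℝ) (ℓ j : ℕ) : Set ℝ :=
  Set.uIcc (F^[j] x) (F^[j + qDen ρ ℓ] x - (pNum ρ ℓ : ℝ))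

/-- The length of the atom `I_ℓ^j(x)`. -/
def atomLen (F : ℝ → ℝ) (ρ x : ℝ) (ℓ j : ℕ) : ℝ :=
  |F^[j + qDen ρ ℓ] x - (pNum ρ ℓ : ℝ) - F^[j] x|

/-- The two endpoints (as lifts) of the atom `I_ℓ^j(x)`. -/
def atomEnds (F : ℝ → ℝ) (ρ x : ℝ) (ℓ j : ℕ) : Set ℝ :=
  {F^[j] x, F^[j + qDen ρ ℓ] x - (pNum ρ ℓ : ℝ)}

/-- `(ℓ, j)` indexes an atom of the `n`-th dynamical partition
`P_n(x) = {I_n^i(x) : i < q_{n+1}} ∪ {I_{n+1}^j(x) : j < q_n}`. -/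
def IsAtomIdx (ρ : ℝ) (n ℓ j : ℕ) : Prop :=
  (ℓ = n ∧ j < qDen ρ (n + 1)) ∨ (ℓ = n + 1 ∧ j < qDen ρ n)

/-- Two distinct atoms are adjacent when they share an endpoint on the circle,
i.e. when some endpoints of their lifts differ by an integer. -/
def AdjacentAtoms (F : ℝ → ℝ) (ρ x : ℝ) (ℓ₁ j₁ ℓ₂ j₂ : ℕ) : Prop :=
  (ℓ₁, j₁) ≠ (ℓ₂, j₂) ∧
    ∃ u ∈ atomEnds F ρ x ℓ₁ j₁, ∃ w ∈ atomEnds F ρ x ℓ₂ j₂, ∃ k : ℤ, w = u + (k : ℝ)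

/-!
The map increases the cross-ratio of four points `a < b < c < d` by a factor at most
`exp (Φ d - Φ a)`, where the potential `Φ` gains a fixed amount over the circle: away from the
critical points the cost is proportional to length, an interval inside a critical neighborhood that
misses the critical point costs nothing by the negative Schwarzian derivative, and an interval
containing a critical point is charged to a step of `Φ` there. The iterates of `[x, f^{q_n} x]` of
time less than `q_{n+1}` are disjoint on the circle, so the total cost along them is bounded.

Let `g` and `h` be the returns of times `q_n` and `q_{n+1}`. At a point of least displacement of `g`
one of the two cross-ratio bounds is free; pulled back by the iterate that covers that point, it
makes `[x, g x]` and `[g x, g (g x)]` comparable for every `x`. The essential remaining bound is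
that of `|I_n|` by `|I_{n+1}|`: with `r = |I_n| / |I_{n+1}|`, bounded distortion gives
`|f(I_n)| ≲ r |f(I_{n+1})|`, whereas the power law at the critical point gives
`|f(I_{n+1})| ≲ r^{-s} |f(I_n)|`. Hence `r^{s-1} ≲ 1`, and `s > 1`.
-/

/-! ## Cross-ratios -/

/-- The cross-ratio `|ab| |cd| / (|ac| |bd|)` of four ordered points, the quantity whose distortion
under iteration is controlled. -/
def crossRatio (a b c d : ℝ) : ℝ := (b - a) * (d - c) / ((c - a) * (d - b))

section CrossRatio

variable {a b c d : ℝ}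

lemma crossRatio_pos (hab : a < b) (hbc : b < c) (hcd : c < d) : 0 < crossRatio a b c d :=
  div_pos (mul_pos (by linarith) (by linarith)) (mul_pos (by linarith) (by linarith))

lemma crossRatio_neg (a b c d : ℝ) : crossRatio (-d) (-c) (-b) (-a) = crossRatio a b c d := by
  unfold crossRatio
  congr 1 <;> ring

lemma log_crossRatio (hab : a < b) (hbc : b < c) (hcd : c < d) :
    Real.log (crossRatio a b c d) =
      Real.log (b - a) + Real.log (d - c) - (Real.log (c - a) + Real.log (d - b)) := by
  have hba : b - a ≠ 0 := by linarith
  have hdc : d - c ≠ 0 := by linarith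
  have hca : c - a ≠ 0 := by linarith
  have hdb : d - b ≠ 0 := by linarith
  rw [crossRatio, Real.log_div (mul_ne_zero hba hdc) (mul_ne_zero hca hdb), Real.log_mul hba hdc,
    Real.log_mul hca hdb]

lemma one_le_mul_crossRatio {s t : ℝ} (hs : 0 ≤ s) (hab : a < b) (hbc : b < c) (hcd : c < d)
    (hleft : c - a ≤ s * (b - a)) (hright : d - b ≤ t * (d - c)) :
    1 ≤ s * t * crossRatio a b c d := by
  rw [crossRatio, ← mul_div_assoc, one_le_div (mul_pos (by linarith) (by linarith))]
  calc (c - a) * (d - b) ≤ (s * (b - a)) * (t * (d - c)) :=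
        mul_le_mul hleft hright (by linarith) (mul_nonneg hs (by linarith))
    _ = s * t * ((b - a) * (d - c)) := by ring

lemma crossRatio_mul_le_left (hab : a < b) (hbc : b < c) (hcd : c < d) :
    crossRatio a b c d * (c - a) ≤ b - a := by
  rw [crossRatio, div_mul_eq_mul_div, div_le_iff₀ (mul_pos (by linarith) (by linarith))]
  have : 0 ≤ (b - a) * (c - a) * (c - b) :=
    mul_nonneg (mul_nonneg (by linarith) (by linarith)) (by linarith)
  linarith

lemma crossRatio_mul_le_right (hab : a < b) (hbc : b < c) (hcd : c < d) :
    crossRatio a b c d * (d - b) ≤ d - c := by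
  have := crossRatio_mul_le_left (neg_lt_neg hcd) (neg_lt_neg hbc) (neg_lt_neg hab)
  rw [crossRatio_neg] at this
  linarith

end CrossRatio

/-! ## Negative Schwarzian derivative contracts cross-ratios -/

lemma exists_affine_le_of_convexOn {S : Set ℝ} {φ : ℝ → ℝ} (hφ : ConvexOn ℝ S φ) {u : ℝ}
    (hu : u ∈ interior S) : ∃ m, ∀ t ∈ S, φ u + m * (t - u) ≤ φ t := by
  refine ⟨derivWithin φ (Ioi u) u, fun t ht => ?_⟩
  rcases lt_trichotomy u t with hut | rfl | htu
  · have := hφ.rightDeriv_le_slope_of_mem_interior hu ht hut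
    rw [slope_def_field, le_div_iff₀ (sub_pos.2 hut)] at this
    linarith
  · simp
  · have := (hφ.slope_le_leftDeriv_of_mem_interior ht hu htu).trans
      (hφ.leftDeriv_le_rightDeriv_of_mem_interior hu)
    rw [slope_def_field, div_le_iff₀ (sub_pos.2 htu)] at this
    linarith

section InvSq

variable {F F' φ : ℝ → ℝ} {a b c d u p m : ℝ}

lemma sub_le_of_deriv_le_inv_affine_sq (hud : u ≤ d) (hp : 0 < p) (hpd : 0 < p + m * (d - u))
    (hF : ContinuousOn F (Icc u d)) (hF' : ∀ t ∈ Ioo u d, HasDerivAt F (F' t) t)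
    (hle : ∀ t ∈ Ioo u d, F' t ≤ ((p + m * (t - u)) ^ 2)⁻¹) :
    F d - F u ≤ (d - u) / (p * (p + m * (d - u))) := by
  have hpos : ∀ t ∈ Icc u d, 0 < p + m * (t - u) := fun t ht => by
    rcases le_total 0 m with hm | hm
    · linarith [mul_nonneg hm (sub_nonneg.2 ht.1)]
    · linarith [mul_le_mul_of_nonpos_left (sub_le_sub_right ht.2 u) hm]
  let H : ℝ → ℝ := fun t => (t - u) / (p * (p + m * (t - u))) - F t
  have hH' : ∀ t ∈ Ioo u d, HasDerivAt H (((p + m * (t - u)) ^ 2)⁻¹ - F' t) t := fun t ht => by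
    have hpt := hpos t (Ioo_subset_Icc_self ht)
    have hnum : HasDerivAt (fun t : ℝ => t - u) 1 t := (hasDerivAt_id t).sub_const u
    have hden : HasDerivAt (fun t : ℝ => p * (p + m * (t - u))) (p * (m * 1)) t :=
      ((hnum.const_mul m).const_add p).const_mul p
    refine ((hnum.div hden (by positivity)).sub (hF' t ht)).congr_deriv ?_
    congr 1
    field_simp
    ring
  have hmono : MonotoneOn H (Icc u d) := by
    refine monotoneOn_of_hasDerivWithinAt_nonneg (convex_Icc u d)
      (ContinuousOn.sub (ContinuousOn.div (by fun_prop) (by fun_prop) fun t ht => ?_) hF)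
      (f' := fun t => ((p + m * (t - u)) ^ 2)⁻¹ - F' t) ?_ ?_
    · exact (mul_pos hp (hpos t ht)).ne'
    · rw [interior_Icc]
      exact fun t ht => (hH' t ht).hasDerivWithinAt
    · rw [interior_Icc]
      exact fun t ht => sub_nonneg.2 (hle t ht)
  have := hmono (left_mem_Icc.2 hud) (right_mem_Icc.2 hud) hud
  simp only [H, sub_self, zero_div, zero_sub] at this
  linarith

lemma inv_sub_add_div_le_of_deriv_le_inv_affine_sq (hud : u < d) (hp : 0 < p)
    (hlt : F u < F d) (hF : ContinuousOn F (Icc u d))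
    (hF' : ∀ t ∈ Ioo u d, HasDerivAt F (F' t) t)
    (hle : ∀ t ∈ Ioo u d, 0 < p + m * (t - u) → F' t ≤ ((p + m * (t - u)) ^ 2)⁻¹) :
    (d - u)⁻¹ + m / p ≤ (p ^ 2)⁻¹ / (F d - F u) := by
  have hdu : 0 < d - u := sub_pos.2 hud
  have hFd : 0 < F d - F u := sub_pos.2 hlt
  have hsum : (d - u)⁻¹ + m / p = (p + m * (d - u)) / ((d - u) * p) := by field_simp
  rw [hsum]
  rcases le_or_gt (p + m * (d - u)) 0 with hneg | hpd
  · exact (div_nonpos_of_nonpos_of_nonneg hneg (by positivity)).trans (by positivity)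
  have hpos : ∀ t ∈ Ioo u d, 0 < p + m * (t - u) := fun t ht => by
    rcases le_total 0 m with hm | hm
    · linarith [mul_nonneg hm (sub_nonneg.2 ht.1.le)]
    · linarith [mul_le_mul_of_nonpos_left (sub_le_sub_right ht.2.le u) hm]
  have hFle := sub_le_of_deriv_le_inv_affine_sq hud.le hp hpd hF hF' fun t ht =>
    hle t ht (hpos t ht)
  rw [le_div_iff₀ hFd]
  refine (mul_le_mul_of_nonneg_left hFle (by positivity)).trans (le_of_eq ?_)
  field_simp

lemma inv_add_inv_le_of_convexOn (hφ : ConvexOn ℝ (Ioo a d) φ) (hφ_pos : ∀ x ∈ Ioo a d, 0 < φ x)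
    (hF : ContinuousOn F (Icc a d)) (hmono : StrictMonoOn F (Icc a d))
    (hF' : ∀ x ∈ Ioo a d, HasDerivAt F ((φ x ^ 2)⁻¹) x) (hu : u ∈ Ioo a d) :
    (d - u)⁻¹ + (u - a)⁻¹ ≤ (φ u ^ 2)⁻¹ / (F d - F u) + (φ u ^ 2)⁻¹ / (F u - F a) := by
  have had : a ≤ d := (hu.1.trans hu.2).le
  obtain ⟨m, hm⟩ := exists_affine_le_of_convexOn hφ (by rwa [interior_Ioo])
  have hle : ∀ t ∈ Ioo a d, 0 < φ u + m * (t - u) →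
      (φ t ^ 2)⁻¹ ≤ ((φ u + m * (t - u)) ^ 2)⁻¹ := fun t ht hpos => by
    have := hm t ht
    gcongr
  have hright := inv_sub_add_div_le_of_deriv_le_inv_affine_sq (m := m) hu.2 (hφ_pos u hu)
    (hmono (Ioo_subset_Icc_self hu) (right_mem_Icc.2 had) hu.2)
    (hF.mono (Icc_subset_Icc_left hu.1.le)) (fun t ht => hF' t ⟨hu.1.trans ht.1, ht.2⟩)
    fun t ht => hle t ⟨hu.1.trans ht.1, ht.2⟩
  have hneg : MapsTo (fun t => -t) (Icc (-u) (-a)) (Icc a d) := fun t ht =>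
    ⟨by linarith [ht.2], by linarith [ht.1, hu.2]⟩
  have hneg' : MapsTo (fun t => -t) (Ioo (-u) (-a)) (Ioo a d) := fun t ht =>
    ⟨by linarith [ht.2], by linarith [ht.1, hu.2]⟩
  have hleft := inv_sub_add_div_le_of_deriv_le_inv_affine_sq (F := fun t => -F (-t))
    (F' := fun t => (φ (-t) ^ 2)⁻¹) (p := φ u) (m := -m) (neg_lt_neg hu.1) (hφ_pos u hu)
    (by simpa using hmono (left_mem_Icc.2 had) (Ioo_subset_Icc_self hu) hu.1)
    ((hF.comp continuousOn_neg hneg).neg)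
    (fun t ht => ((hF' (-t) (hneg' ht)).comp t (hasDerivAt_neg t)).neg.congr_deriv (by ring))
    (fun t ht hpos => by
      have hlin : φ u + -m * (t - -u) = φ u + m * (-t - u) := by ring
      rw [hlin] at hpos ⊢
      exact hle (-t) (hneg' ht) hpos)
  simp only [neg_neg, neg_sub_neg, neg_div] at hleft
  linarith

lemma strictMonoOn_of_deriv_eq_inv_sq (hφ_pos : ∀ x ∈ Ioo a d, 0 < φ x)
    (hF : ContinuousOn F (Icc a d)) (hF' : ∀ x ∈ Ioo a d, HasDerivAt F ((φ x ^ 2)⁻¹) x) :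
    StrictMonoOn F (Icc a d) := by
  refine strictMonoOn_of_hasDerivWithinAt_pos (convex_Icc a d) hF (f' := fun x => (φ x ^ 2)⁻¹)
    ?_ ?_ <;> rw [interior_Icc]
  · exact fun x hx => (hF' x hx).hasDerivWithinAt
  · exact fun x hx => inv_pos.2 (pow_pos (hφ_pos x hx) 2)

lemma antitoneOn_log_of_convexOn (hφ : ConvexOn ℝ (Ioo a d) φ) (hφ_pos : ∀ x ∈ Ioo a d, 0 < φ x)
    (hF : ContinuousOn F (Icc a d)) (hF' : ∀ x ∈ Ioo a d, HasDerivAt F ((φ x ^ 2)⁻¹) x) :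
    AntitoneOn (fun u => Real.log (F d - F u) - Real.log (d - u) - Real.log (F u - F a) +
      Real.log (u - a)) (Ioo a d) := by
  have hmono := strictMonoOn_of_deriv_eq_inv_sq hφ_pos hF hF'
  have hL' : ∀ u ∈ Ioo a d, HasDerivAt (fun u => Real.log (F d - F u) - Real.log (d - u) -
      Real.log (F u - F a) + Real.log (u - a)) (-(φ u ^ 2)⁻¹ / (F d - F u) - -1 / (d - u) -
        (φ u ^ 2)⁻¹ / (F u - F a) + 1 / (u - a)) u := fun u hu => by
    have had : a ≤ d := (hu.1.trans hu.2).le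
    have hFd := hmono (Ioo_subset_Icc_self hu) (right_mem_Icc.2 had) hu.2
    have hFa := hmono (left_mem_Icc.2 had) (Ioo_subset_Icc_self hu) hu.1
    exact ((((hF' u hu).const_sub (F d)).log (sub_pos.2 hFd).ne').sub
      (((hasDerivAt_id u).const_sub d).log (sub_pos.2 hu.2).ne') |>.sub
      (((hF' u hu).sub_const (F a)).log (sub_pos.2 hFa).ne')).add
      (((hasDerivAt_id u).sub_const a).log (sub_pos.2 hu.1).ne')
  refine antitoneOn_of_hasDerivWithinAt_nonpos (convex_Ioo a d)
    (fun u hu => (hL' u hu).continuousAt.continuousWithinAt)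
    (fun u hu => (hL' u (interior_subset hu)).hasDerivWithinAt) fun u hu => ?_
  have := inv_add_inv_le_of_convexOn hφ hφ_pos hF hmono hF' (interior_subset hu)
  rw [neg_div, neg_div, one_div, one_div]
  linarith

theorem crossRatio_le_of_deriv_eq_inv_sq (hab : a < b) (hbc : b < c) (hcd : c < d)
    (hφ : ConvexOn ℝ (Ioo a d) φ) (hφ_pos : ∀ x ∈ Ioo a d, 0 < φ x)
    (hF : ContinuousOn F (Icc a d)) (hF' : ∀ x ∈ Ioo a d, HasDerivAt F ((φ x ^ 2)⁻¹) x) :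
    crossRatio (F a) (F b) (F c) (F d) ≤ crossRatio a b c d := by
  have hmono := strictMonoOn_of_deriv_eq_inv_sq hφ_pos hF hF'
  have ha : a ∈ Icc a d := left_mem_Icc.2 (by linarith)
  have hb : b ∈ Icc a d := ⟨by linarith, by linarith⟩
  have hc : c ∈ Icc a d := ⟨by linarith, by linarith⟩
  have hd : d ∈ Icc a d := right_mem_Icc.2 (by linarith)
  have hFab := hmono ha hb hab
  have hFbc := hmono hb hc hbc
  have hFcd := hmono hc hd hcd
  rw [← Real.log_le_log_iff (crossRatio_pos hFab hFbc hFcd) (crossRatio_pos hab hbc hcd),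
    log_crossRatio hFab hFbc hFcd, log_crossRatio hab hbc hcd]
  have := antitoneOn_log_of_convexOn hφ hφ_pos hF hF' ⟨hab, hbc.trans hcd⟩ ⟨hab.trans hbc, hcd⟩
    hbc.le
  simp only at this
  linarith

end InvSq

section Schwarzian

variable {F : ℝ → ℝ} {a b c d : ℝ}

/-- `(√F')⁻¹` solves the linear equation `φ'' = -(1/2) SF φ`; this is where the sign of the
Schwarzian derivative enters. -/
lemma convexOn_inv_sqrt_deriv (hF : ContDiff ℝ 3 F) (hpos : ∀ x ∈ Ioo a d, 0 < deriv F x)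
    (hS : ∀ x ∈ Ioo a d, schwarzianDeriv F x ≤ 0) :
    ConvexOn ℝ (Ioo a d) fun x => (√(deriv F x))⁻¹ := by
  have hdF : Differentiable ℝ (deriv F) := by
    have := hF.differentiable_iteratedDeriv 1 (by norm_num)
    rwa [iteratedDeriv_one] at this
  have hddF : Differentiable ℝ (deriv (deriv F)) := by
    have := hF.differentiable_iteratedDeriv 2 (by norm_num)
    rwa [iteratedDeriv_succ, iteratedDeriv_one] at this
  let φ : ℝ → ℝ := fun x => (√(deriv F x))⁻¹
  let ψ : ℝ → ℝ := fun x => deriv (deriv F) x / deriv F x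
  have hφ' : ∀ x ∈ Ioo a d, HasDerivAt φ (-(1 / 2) * ψ x * φ x) x := fun x hx => by
    have hx_pos := hpos x hx
    have hsqrt : 0 < √(deriv F x) := Real.sqrt_pos.2 hx_pos
    refine (((hdF x).hasDerivAt.sqrt hx_pos.ne').inv hsqrt.ne').congr_deriv ?_
    simp only [φ, ψ, Real.sq_sqrt hx_pos.le]
    field_simp
  have hφ'' : ∀ x ∈ Ioo a d, HasDerivAt (fun x => -(1 / 2) * ψ x * φ x)
      (-(1 / 2) * φ x * schwarzianDeriv F x) x := fun x hx => by
    have hψ : HasDerivAt ψ (deriv ψ x) x :=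
      ((hddF x).div (hdF x) (hpos x hx).ne').hasDerivAt
    refine ((hψ.const_mul (-(1 / 2))).mul (hφ' x hx)).congr_deriv ?_
    change _ = -(1 / 2) * φ x * (deriv ψ x - 1 / 2 * ψ x ^ 2)
    ring
  refine convexOn_of_hasDerivWithinAt2_nonneg (convex_Ioo a d)
    (f' := fun x => -(1 / 2) * ψ x * φ x) (f'' := fun x => -(1 / 2) * φ x * schwarzianDeriv F x)
    (fun x hx => (hφ' x hx).continuousAt.continuousWithinAt) ?_ ?_ ?_ <;> rw [interior_Ioo]
  · exact fun x hx => (hφ' x hx).hasDerivWithinAt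
  · exact fun x hx => (hφ'' x hx).hasDerivWithinAt
  · intro x hx
    have hφ_nonneg : 0 ≤ φ x := inv_nonneg.2 (Real.sqrt_nonneg _)
    linarith [mul_nonneg hφ_nonneg (neg_nonneg.2 (hS x hx))]

theorem crossRatio_le_of_schwarzianDeriv_nonpos (hF : ContDiff ℝ 3 F) (hab : a < b) (hbc : b < c)
    (hcd : c < d) (hpos : ∀ x ∈ Ioo a d, 0 < deriv F x)
    (hS : ∀ x ∈ Ioo a d, schwarzianDeriv F x ≤ 0) :
    crossRatio (F a) (F b) (F c) (F d) ≤ crossRatio a b c d := by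
  refine crossRatio_le_of_deriv_eq_inv_sq hab hbc hcd (convexOn_inv_sqrt_deriv hF hpos hS)
    (fun x hx => inv_pos.2 (Real.sqrt_pos.2 (hpos x hx))) hF.continuous.continuousOn fun x hx => ?_
  rw [inv_pow, inv_inv, Real.sq_sqrt (hpos x hx).le]
  exact (hF.differentiable (by norm_num) x).hasDerivAt

end Schwarzian

/-! ## Derivatives comparable to mean slopes, and power laws -/

/-- The derivative of `F` at any point of a subinterval of `s` is at most `L` times the mean slope
of `F` over that subinterval; this bounds the distortion of cross-ratios, critical points
included. -/
def DerivLeSlope (F : ℝ → ℝ) (L : ℝ) (s : Set ℝ) : Prop :=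
  ∀ u ∈ s, ∀ v ∈ s, u < v → ∀ x ∈ Icc u v, deriv F x * (v - u) ≤ L * (F v - F u)

/-- The derivative of `F` on `s` is pinched between two multiples of `|x - c| ^ σ`. -/
def DerivPowerLaw (F : ℝ → ℝ) (c σ α β : ℝ) (s : Set ℝ) : Prop :=
  ∀ x ∈ s, α * |x - c| ^ σ ≤ deriv F x ∧ deriv F x ≤ β * |x - c| ^ σ

/-- The displacement of `F` from a critical value obeys a power law of exponent `s`, uniformly at
scale at most `1` and on both sides of the critical point `c`. -/
def PowerLawAt (F : ℝ → ℝ) (c s A B : ℝ) : Prop :=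
  ∀ t, |t| ≤ 1 → A * |t| ^ s ≤ |F (c + t) - F c| ∧ |F (c + t) - F c| ≤ B * |t| ^ s

/-- The conjugate of `F` by `x ↦ -x`. It exchanges left and right. -/
def conjNeg (F : ℝ → ℝ) (x : ℝ) : ℝ := -F (-x)

section Slope

variable {F : ℝ → ℝ} {a b c d x σ α β η A B K L L' : ℝ} {s t : Set ℝ}

lemma deriv_conjNeg (F : ℝ → ℝ) (x : ℝ) : deriv (conjNeg F) x = deriv F (-x) := by
  change deriv (fun y => -F (-y)) x = _
  rw [deriv.fun_neg, deriv_comp_neg, neg_neg]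

lemma differentiable_conjNeg (hF : Differentiable ℝ F) : Differentiable ℝ (conjNeg F) :=
  (hF.comp differentiable_neg).neg

lemma strictMono_conjNeg (hF : StrictMono F) : StrictMono (conjNeg F) :=
  fun _ _ h => neg_lt_neg (hF (neg_lt_neg h))

lemma monotone_conjNeg (hF : Monotone F) : Monotone (conjNeg F) :=
  fun _ _ h => neg_le_neg (hF (neg_le_neg h))

namespace DerivPowerLaw

lemma mono (h : DerivPowerLaw F c σ α β s) (hts : t ⊆ s) : DerivPowerLaw F c σ α β t :=
  fun x hx => h x (hts hx)

lemma conj_neg (h : DerivPowerLaw F c σ α β s) : DerivPowerLaw (conjNeg F) (-c) σ α β (-s) :=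
  fun x hx => by
    rw [deriv_conjNeg, ← abs_neg, show -(x - -c) = -x - c by ring]
    exact h (-x) hx

lemma deriv_mul_le_of_abs_le (h : DerivPowerLaw F c σ α β (Icc a d)) (hF : Differentiable ℝ F)
    (hmono : Monotone F) (hσ : 0 ≤ σ) (hα : 0 < α) (hβ : 0 ≤ β) (had : a < d)
    (hle : |a - c| ≤ |d - c|) (hx : x ∈ Icc a d) :
    deriv F x * (d - a) ≤ 4 * 2 ^ σ * β / α * (F d - F a) := by
  have hcd : c < d := by
    by_contra! hdc
    rw [abs_of_neg (by linarith), abs_of_nonpos (by linarith)] at hle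
    linarith
  rw [abs_of_pos (sub_pos.2 hcd), abs_le] at hle
  have : 0 ≤ (d - c) / 2 := by linarith
  have hupper : deriv F x ≤ β * (d - c) ^ σ := (h x hx).2.trans (by
    have : |x - c| ≤ d - c := abs_le.2 ⟨by linarith [hx.1], by linarith [hx.2]⟩
    gcongr)
  have hlower : α * ((d - c) / 2) ^ σ * (d - (d - (d - a) / 4)) ≤ F d - F (d - (d - a) / 4) := by
    refine (convex_Icc (d - (d - a) / 4) d).mul_sub_le_image_sub_of_le_deriv
      hF.continuous.continuousOn hF.differentiableOn (fun t ht => ?_) _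
      (left_mem_Icc.2 (by linarith)) _ (right_mem_Icc.2 (by linarith)) (by linarith)
    obtain ⟨ht₁, ht₂⟩ := interior_subset ht
    have : (d - c) / 2 ≤ |t - c| := le_abs.2 (Or.inl (by linarith))
    exact le_trans (by gcongr) (h t ⟨by linarith, ht₂⟩).1
  have hFa : F a ≤ F (d - (d - a) / 4) := hmono (by linarith)
  calc deriv F x * (d - a) ≤ β * (d - c) ^ σ * (d - a) :=
        mul_le_mul_of_nonneg_right hupper (by linarith)
    _ = 4 * 2 ^ σ * β / α * (α * ((d - c) / 2) ^ σ * (d - (d - (d - a) / 4))) := by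
        rw [Real.div_rpow (by linarith) zero_le_two]
        field_simp
        ring
    _ ≤ 4 * 2 ^ σ * β / α * (F d - F a) := by
        gcongr
        linarith

lemma derivLeSlope (h : DerivPowerLaw F c σ α β s) (hs : s.OrdConnected) (hF : Differentiable ℝ F)
    (hmono : Monotone F) (hσ : 0 ≤ σ) (hα : 0 < α) (hβ : 0 ≤ β) :
    DerivLeSlope F (4 * 2 ^ σ * β / α) s := by
  intro u hu v hv huv x hx
  have huv_law := h.mono (hs.out hu hv)
  rcases le_total |u - c| |v - c| with hle | hle
  · exact huv_law.deriv_mul_le_of_abs_le hF hmono hσ hα hβ huv hle hx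
  · have hneg := huv_law.conj_neg
    rw [neg_Icc] at hneg
    have := hneg.deriv_mul_le_of_abs_le (x := -x) (differentiable_conjNeg hF)
      (monotone_conjNeg hmono) hσ hα hβ (neg_lt_neg huv)
      (by rwa [neg_sub_neg, neg_sub_neg, abs_sub_comm, abs_sub_comm c u])
      ⟨neg_le_neg hx.2, neg_le_neg hx.1⟩
    simpa [deriv_conjNeg, conjNeg, neg_add_eq_sub] using this

end DerivPowerLaw

namespace DerivLeSlope

lemma mono (h : DerivLeSlope F L s) (hmono : Monotone F) (hL : L ≤ L') : DerivLeSlope F L' s :=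
  fun u hu v hv huv x hx => (h u hu v hv huv x hx).trans
    (mul_le_mul_of_nonneg_right hL (sub_nonneg.2 (hmono huv.le)))

lemma anti (h : DerivLeSlope F L s) (hts : t ⊆ s) : DerivLeSlope F L t :=
  fun u hu v hv => h u (hts hu) v (hts hv)

lemma of_deriv_le (hF : Differentiable ℝ F) (hs : s.OrdConnected)
    (h : ∀ x ∈ s, ∀ t ∈ s, deriv F x ≤ L * deriv F t) : DerivLeSlope F L s := by
  intro u hu v hv huv x hx
  obtain ⟨t, ht, hslope⟩ := exists_deriv_eq_slope F huv hF.continuous.continuousOn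
    hF.differentiableOn
  have hvu : 0 < v - u := sub_pos.2 huv
  rw [← (eq_div_iff hvu.ne').1 hslope, ← mul_assoc]
  exact mul_le_mul_of_nonneg_right
    (h x (hs.out hu hv hx) t (hs.out hu hv (Ioo_subset_Icc_self ht))) hvu.le

lemma of_le_deriv_of_deriv_le {m M : ℝ} (hF : Differentiable ℝ F) (hs : s.OrdConnected) (hm : 0 < m)
    (hM : 0 ≤ M) (hlow : ∀ x ∈ s, m ≤ deriv F x) (hup : ∀ x ∈ s, deriv F x ≤ M) :
    DerivLeSlope F (M / m) s :=
  of_deriv_le hF hs fun x hx t ht => by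
    rw [div_mul_eq_mul_div, le_div_iff₀ hm]
    exact mul_le_mul (hup x hx) (hlow t ht) hm.le hM

lemma of_abs_deriv_deriv_le {m M : ℝ} (hF : Differentiable ℝ F) (hF' : Differentiable ℝ (deriv F))
    (hm : 0 < m) (hM : ∀ x, |deriv (deriv F) x| ≤ M) (hlow : ∀ x ∈ Icc a d, m ≤ deriv F x) :
    DerivLeSlope F (Real.exp (M / m * (d - a))) (Icc a d) := by
  refine of_deriv_le hF ordConnected_Icc fun x hx t ht => ?_
  have hM0 : 0 ≤ M := (abs_nonneg _).trans (hM x)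
  have had : 0 ≤ d - a := sub_nonneg.2 (hx.1.trans hx.2)
  have hosc : deriv F x - deriv F t ≤ M * (d - a) := by
    refine (le_abs_self _).trans ((convex_univ.norm_image_sub_le_of_norm_deriv_le
      (fun y _ => hF' y) (fun y _ => hM y) (mem_univ t) (mem_univ x)).trans ?_)
    exact mul_le_mul_of_nonneg_left (abs_le.2 ⟨by linarith [hx.1, ht.2], by linarith [hx.2, ht.1]⟩)
      hM0
  calc deriv F x ≤ deriv F t + m * (M / m * (d - a)) := by
        rw [← mul_assoc, mul_div_cancel₀ M hm.ne']; linarith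
    _ ≤ deriv F t + deriv F t * (M / m * (d - a)) := by gcongr; exact hlow t ht
    _ = (M / m * (d - a) + 1) * deriv F t := by ring
    _ ≤ Real.exp (M / m * (d - a)) * deriv F t :=
        mul_le_mul_of_nonneg_right (Real.add_one_le_exp _) (hm.le.trans (hlow t ht))

theorem crossRatio_le (h : DerivLeSlope F L (Icc a d)) (hF : Differentiable ℝ F)
    (hmono : StrictMono F) (hL : 0 ≤ L) (hab : a < b) (hbc : b < c) (hcd : c < d) :
    crossRatio (F a) (F b) (F c) (F d) ≤ L ^ 2 * crossRatio a b c d := by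
  have hslope : ∀ u v, u < v → ∃ x ∈ Ioo u v, F v - F u = deriv F x * (v - u) := fun u v huv => by
    obtain ⟨x, hx, hslope⟩ := exists_deriv_eq_slope F huv hF.continuous.continuousOn
      hF.differentiableOn
    exact ⟨x, hx, ((eq_div_iff (sub_pos.2 huv).ne').1 hslope).symm⟩
  have hleft : (F b - F a) * (c - a) ≤ L * (F c - F a) * (b - a) := by
    obtain ⟨x, hx, hFx⟩ := hslope a b hab
    have := h a ⟨le_rfl, by linarith⟩ c ⟨by linarith, hcd.le⟩ (hab.trans hbc) x
      ⟨hx.1.le, by linarith [hx.2]⟩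
    rw [hFx]
    linarith [mul_le_mul_of_nonneg_right this (sub_pos.2 hab).le]
  have hright : (F d - F c) * (d - b) ≤ L * (F d - F b) * (d - c) := by
    obtain ⟨x, hx, hFx⟩ := hslope c d hcd
    have := h b ⟨hab.le, by linarith⟩ d ⟨by linarith, le_rfl⟩ (hbc.trans hcd) x
      ⟨by linarith [hx.1], hx.2.le⟩
    rw [hFx]
    linarith [mul_le_mul_of_nonneg_right this (sub_pos.2 hcd).le]
  have hFab := hmono hab
  have hFbc := hmono hbc
  have hFcd := hmono hcd
  unfold crossRatio
  rw [← mul_div_assoc, div_le_div_iff₀ (mul_pos (by linarith) (by linarith))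
    (mul_pos (by linarith) (by linarith))]
  have := mul_le_mul hleft hright (mul_nonneg (by linarith) (by linarith))
    (mul_nonneg (mul_nonneg hL (by linarith)) (by linarith))
  linarith

end DerivLeSlope

lemma rpow_le_sub_le_of_derivPowerLaw {t : ℝ} (h : DerivPowerLaw F c σ α β (Ico c (c + η)))
    (hF : Differentiable ℝ F) (hmono : Monotone F) (hF1 : F (c + 1) = F c + 1) (hσ : 0 ≤ σ)
    (hα : 0 ≤ α) (hβ : 0 ≤ β) (hη : 0 < η) (hη1 : η ≤ 1) (ht : 0 < t) (ht1 : t ≤ 1) :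
    α * (η / 4) ^ (σ + 1) * t ^ (σ + 1) ≤ F (c + t) - F c ∧
      F (c + t) - F c ≤ (β + (1 / η) ^ (σ + 1)) * t ^ (σ + 1) := by
  have hrpow : ∀ r : ℝ, 0 < r → r ^ (σ + 1) = r ^ σ * r := fun r hr => Real.rpow_add_one hr.ne' σ
  constructor
  · let r := η / 4 * t
    have hr : 0 < r := by positivity
    have hr_eta : 2 * r < η := by simp only [r]; nlinarith
    have hr_t : 2 * r ≤ t := by simp only [r]; nlinarith
    have hmvt : α * r ^ σ * ((c + 2 * r) - (c + r)) ≤ F (c + 2 * r) - F (c + r) := by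
      refine (convex_Icc (c + r) (c + 2 * r)).mul_sub_le_image_sub_of_le_deriv
        hF.continuous.continuousOn hF.differentiableOn (fun x hx => ?_) _
        (left_mem_Icc.2 (by linarith)) _ (right_mem_Icc.2 (by linarith)) (by linarith)
      obtain ⟨hx₁, hx₂⟩ := interior_subset hx
      have : r ≤ |x - c| := le_abs.2 (Or.inl (by linarith))
      exact le_trans (by gcongr) (h x ⟨by linarith, by linarith⟩).1
    calc α * (η / 4) ^ (σ + 1) * t ^ (σ + 1) = α * r ^ σ * ((c + 2 * r) - (c + r)) := by
          rw [mul_assoc, ← Real.mul_rpow (by positivity) ht.le, hrpow r hr]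
          ring
      _ ≤ F (c + 2 * r) - F (c + r) := hmvt
      _ ≤ F (c + t) - F c := sub_le_sub (hmono (by linarith)) (hmono (by linarith))
  · rw [add_mul]
    rcases lt_or_ge t η with htη | hηt
    · have hmvt : F (c + t) - F c ≤ β * t ^ σ * ((c + t) - c) := by
        refine (convex_Icc c (c + t)).image_sub_le_mul_sub_of_deriv_le
          hF.continuous.continuousOn hF.differentiableOn (fun x hx => ?_) _
          (left_mem_Icc.2 (by linarith)) _ (right_mem_Icc.2 (by linarith)) (by linarith)
        obtain ⟨hx₁, hx₂⟩ := interior_subset hx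
        have : |x - c| ≤ t := abs_le.2 ⟨by linarith, by linarith⟩
        exact (h x ⟨by linarith, by linarith⟩).2.trans (by gcongr)
      have hscale : 0 ≤ (1 / η) ^ (σ + 1) * t ^ (σ + 1) := by positivity
      rw [hrpow t ht] at hscale ⊢
      linarith
    · have hscale : 1 ≤ (1 / η) ^ (σ + 1) * t ^ (σ + 1) := by
        rw [← Real.mul_rpow (by positivity) ht.le, one_div_mul_eq_div]
        exact Real.one_le_rpow ((one_le_div hη).2 hηt) (by linarith)
      have hβt : 0 ≤ β * t ^ (σ + 1) := by positivity
      linarith [hmono (show c + t ≤ c + 1 by linarith)]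

theorem powerLawAt_of_derivPowerLaw (h : DerivPowerLaw F c σ α β (Ioo (c - η) (c + η)))
    (hF : Differentiable ℝ F) (hmono : Monotone F) (hF1 : ∀ x, F (x + 1) = F x + 1) (hσ : 0 ≤ σ)
    (hα : 0 ≤ α) (hβ : 0 ≤ β) (hη : 0 < η) (hη1 : η ≤ 1) :
    PowerLawAt F c (σ + 1) (α * (η / 4) ^ (σ + 1)) (β + (1 / η) ^ (σ + 1)) := by
  intro t ht
  rcases lt_trichotomy t 0 with hneg | rfl | hpos
  · rw [abs_of_neg hneg] at ht ⊢
    have hF1' : conjNeg F (-c + 1) = conjNeg F (-c) + 1 := by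
      have := hF1 (c - 1)
      rw [sub_add_cancel] at this
      simp only [conjNeg, neg_neg, neg_add, ← sub_eq_add_neg]
      linarith
    have hlaw := h.conj_neg
    rw [neg_Ioo] at hlaw
    have := rpow_le_sub_le_of_derivPowerLaw (t := -t) (η := η)
      (hlaw.mono fun x hx => ⟨by linarith [hx.1], by linarith [hx.2]⟩) (differentiable_conjNeg hF)
      (monotone_conjNeg hmono) hF1' hσ hα hβ hη hη1 (neg_pos.2 hneg) ht
    rw [abs_of_nonpos (sub_nonpos.2 (hmono (by linarith)))]
    simpa [conjNeg, ← neg_add, neg_add_eq_sub] using this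
  · simp [Real.zero_rpow (show σ + 1 ≠ 0 by linarith)]
  · rw [abs_of_pos hpos] at ht ⊢
    rw [abs_of_nonneg (sub_nonneg.2 (hmono (by linarith)))]
    exact rpow_le_sub_le_of_derivPowerLaw
      (h.mono fun x hx => ⟨by linarith [hx.1], hx.2⟩) hF hmono (hF1 c) hσ hα hβ hη hη1 hpos ht

namespace PowerLawAt

variable {s : ℝ}

lemma conj_neg (h : PowerLawAt F c s A B) : PowerLawAt (conjNeg F) (-c) s A B := fun t ht => by
  have := h (-t) (by rwa [abs_neg])
  rw [abs_neg] at this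
  simpa only [conjNeg, neg_add, neg_neg, neg_sub_neg, abs_sub_comm] using this

lemma abs_sub_le (h : PowerLawAt F c s A B) (hA : 0 < A) (hB : 0 ≤ B) {t u : ℝ} (ht : |t| ≤ 1)
    (hu : u ≠ 0) (hu1 : |u| ≤ 1) :
    |F (c + t) - F c| ≤ B / A * (|t| / |u|) ^ s * |F (c + u) - F c| := by
  have : 0 < |u| ^ s := Real.rpow_pos_of_pos (abs_pos.2 hu) s
  calc |F (c + t) - F c| ≤ B * |t| ^ s := (h t ht).2
    _ = B / A * (|t| / |u|) ^ s * (A * |u| ^ s) := by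
        rw [Real.div_rpow (abs_nonneg t) (abs_nonneg u)]
        field_simp
    _ ≤ _ := by
        gcongr
        exact (h u hu1).1

end PowerLawAt

end Slope

/-! ## Translated iterates and first returns -/

/-- The lift `x ↦ f^[q] x - p` of the `q`-th iterate of a circle map with lift `f`. -/
def iterateSub (f : CircleDeg1Lift) (q : ℕ) (p : ℤ) : CircleDeg1Lift :=
  CircleDeg1Lift.translate (Multiplicative.ofAdd (-(p : ℝ))) * f ^ q

section Word

variable {f : CircleDeg1Lift} {q q' : ℕ} {p p' : ℤ} {x : ℝ}

lemma iterateSub_apply (f : CircleDeg1Lift) (q : ℕ) (p : ℤ) (x : ℝ) :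
    iterateSub f q p x = f^[q] x - p := by
  simp [iterateSub, sub_eq_neg_add, CircleDeg1Lift.coe_pow]

lemma iterateSub_zero_zero (f : CircleDeg1Lift) (x : ℝ) : iterateSub f 0 0 x = x := by
  simp [iterateSub_apply]

lemma iterateSub_iterateSub (f : CircleDeg1Lift) (q q' : ℕ) (p p' : ℤ) (x : ℝ) :
    iterateSub f q p (iterateSub f q' p' x) = iterateSub f (q + q') (p + p') x := by
  simp only [iterateSub_apply, ← CircleDeg1Lift.coe_pow, CircleDeg1Lift.map_sub_int, pow_add,
    CircleDeg1Lift.mul_apply, Int.cast_add]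
  ring

lemma iterateSub_comm (f : CircleDeg1Lift) (q q' : ℕ) (p p' : ℤ) (x : ℝ) :
    iterateSub f q p (iterateSub f q' p' x) = iterateSub f q' p' (iterateSub f q p x) := by
  rw [iterateSub_iterateSub, iterateSub_iterateSub, add_comm q, add_comm p]

lemma iterate_iterateSub (f : CircleDeg1Lift) (i q : ℕ) (p : ℤ) (x : ℝ) :
    f^[i] (iterateSub f q p x) = iterateSub f q p (f^[i] x) := by
  simp only [iterateSub_apply, ← CircleDeg1Lift.coe_pow, CircleDeg1Lift.map_sub_int]
  simp only [CircleDeg1Lift.coe_pow, ← Function.iterate_add_apply, add_comm i]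

lemma iterate_add_int (f : CircleDeg1Lift) (i : ℕ) (x : ℝ) (k : ℤ) :
    f^[i] (x + k) = f^[i] x + k := by
  rw [← CircleDeg1Lift.coe_pow, CircleDeg1Lift.map_add_int]

lemma iterateSub_strictMono (hf : StrictMono f) (q : ℕ) (p : ℤ) : StrictMono (iterateSub f q p) :=
  fun x y hxy => by simpa only [iterateSub_apply, sub_lt_sub_iff_right] using hf.iterate q hxy

lemma iterateSub_continuous (hf : Continuous f) (q : ℕ) (p : ℤ) : Continuous (iterateSub f q p) :=
  ((hf.iterate q).sub continuous_const).congr fun x => (iterateSub_apply f q p x).symm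

lemma iterateSub_surjective (hf : Continuous f) (q : ℕ) (p : ℤ) :
    Function.Surjective (iterateSub f q p) :=
  (CircleDeg1Lift.continuous_iff_surjective _).1 (iterateSub_continuous hf q p)

lemma translationNumber_iterateSub (f : CircleDeg1Lift) (q : ℕ) (p : ℤ) :
    (iterateSub f q p).translationNumber = q * f.translationNumber - p := by
  have hcomm : Commute (CircleDeg1Lift.translate (Multiplicative.ofAdd (-(p : ℝ))) :
      CircleDeg1Lift) (f ^ q) := by
    refine CircleDeg1Lift.ext fun x => ?_
    simpa using (CircleDeg1Lift.map_int_add (f ^ q) (-p) x).symm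
  rw [iterateSub, CircleDeg1Lift.translationNumber_mul_of_commute hcomm,
    CircleDeg1Lift.translationNumber_translate, CircleDeg1Lift.translationNumber_pow]
  ring

lemma lt_iterateSub (h : 0 < q * f.translationNumber - p) (x : ℝ) : x < iterateSub f q p x := by
  rw [← translationNumber_iterateSub] at h
  simpa using (iterateSub f q p).lt_map_of_int_lt_translationNumber (n := 0) (mod_cast h) x

lemma iterateSub_lt (h : q * f.translationNumber - p < 0) (x : ℝ) : iterateSub f q p x < x := by
  rw [← translationNumber_iterateSub] at h
  simpa using (iterateSub f q p).map_lt_of_translationNumber_lt_int (n := 0) (mod_cast h) x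

lemma iterateSub_lt_iterateSub
    (h : q * f.translationNumber - p < q' * f.translationNumber - p') (x : ℝ) :
    iterateSub f q p x < iterateSub f q' p' x := by
  rcases le_total q q' with hqq | hqq <;> obtain ⟨j, rfl⟩ := Nat.exists_eq_add_of_le hqq
  · have hlt := lt_iterateSub (q := j) (p := p' - p) (by push_cast at h ⊢; linarith)
      (iterateSub f q p x)
    rwa [iterateSub_iterateSub, add_comm j, sub_add_cancel] at hlt
  · have hlt := iterateSub_lt (q := j) (p := p - p') (by push_cast at h ⊢; linarith)
      (iterateSub f q' p' x)
    rwa [iterateSub_iterateSub, add_comm j, sub_add_cancel] at hlt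

lemma sub_lt_sub_of_iterateSub_lt_iterateSub (hf : Irrational f.translationNumber)
    (h : iterateSub f q p x < iterateSub f q' p' x) :
    q * f.translationNumber - p < q' * f.translationNumber - p' := by
  by_contra hnot
  rcases lt_or_eq_of_le (not_lt.1 hnot) with hlt | heq
  · exact lt_asymm h (iterateSub_lt_iterateSub hlt x)
  have hrel : ((q - q' : ℤ) : ℝ) * f.translationNumber = (p - p' : ℤ) := by
    push_cast; linarith
  have hq : (q : ℤ) - q' = 0 := by
    by_contra hq
    exact (hf.intCast_mul hq).ne_int _ hrel
  have hp : p = p' := by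
    have : ((p - p' : ℤ) : ℝ) = 0 := by rw [← hrel, hq]; simp
    exact sub_eq_zero.1 (mod_cast this)
  obtain rfl : q = q' := by omega
  exact lt_irrefl _ (hp ▸ h)

end Word

lemma exists_forall_map_sub_le {g : CircleDeg1Lift} (hg : Continuous g) :
    ∃ z, ∀ x, g z - z ≤ g x - x := by
  obtain ⟨z, -, hz⟩ := isCompact_Icc.exists_isMinOn (nonempty_Icc.2 zero_le_one)
    (hg.sub continuous_id).continuousOn
  exact ⟨z, g.forall_map_sub_of_Icc (g z - z ≤ ·) hz⟩

/-- The lift of the circle map conjugate to that of `f` by `x ↦ -x`. -/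
def reflect (f : CircleDeg1Lift) : CircleDeg1Lift where
  toFun := conjNeg f
  monotone' := monotone_conjNeg f.monotone
  map_add_one' x := by
    have h := f.map_sub_int (-x) 1
    simp only [conjNeg, neg_add, Int.cast_one, ← sub_eq_add_neg] at h ⊢
    rw [h]; ring

lemma coe_reflect (f : CircleDeg1Lift) : ⇑(reflect f) = conjNeg f := rfl

lemma iterate_reflect (f : CircleDeg1Lift) (n : ℕ) (x : ℝ) :
    (reflect f)^[n] (-x) = -f^[n] x :=
  ((show Function.Semiconj (fun y : ℝ => -y) f (reflect f) from
    fun y => by simp [coe_reflect, conjNeg]).iterate_right n x).symm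

lemma iterateSub_reflect (f : CircleDeg1Lift) (q : ℕ) (p : ℤ) (x : ℝ) :
    iterateSub (reflect f) q (-p) (-x) = -iterateSub f q p x := by
  simp only [iterateSub_apply, iterate_reflect, Int.cast_neg]
  ring

lemma translationNumber_reflect (f : CircleDeg1Lift) :
    (reflect f).translationNumber = -f.translationNumber := by
  refine CircleDeg1Lift.translationNumber_eq_of_tendsto₀ _ ?_
  refine f.tendsto_translation_number₀.neg.congr fun n => ?_
  rw [CircleDeg1Lift.coe_pow, ← neg_div, ← iterate_reflect, neg_zero]

/-- The arithmetic of two consecutive closest returns of a rotation by `τ`: the return of time `q`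
moves right by `q * τ - p`, the next one, of time `Q`, moves left by a smaller amount, and no
return of time less than `Q` is closer than the first one. -/
structure IsReturnPair (τ : ℝ) (q : ℕ) (p : ℤ) (Q : ℕ) (P : ℤ) : Prop where
  pos : 0 < q
  le : q ≤ Q
  error_pos : 0 < q * τ - p
  error_lt_one : q * τ - p < 1
  next_error_neg : Q * τ - P < 0
  neg_error_lt : -(q * τ - p) < Q * τ - P
  error_le_abs : ∀ j : ℕ, 0 < j → j < Q → ∀ k : ℤ, q * τ - p ≤ |j * τ - k|

/-! ## Cross-ratio distortion along returns -/

/-- A homeomorphism lift with irrational rotation number whose distortion of the cross-ratio of four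
points of `[a, d]` is controlled by the increment on `[a, d]` of a potential `Φ` of degree `V`. -/
structure IsControlled (f : CircleDeg1Lift) (Φ : ℝ → ℝ) (V : ℝ) : Prop where
  strictMono : StrictMono f
  continuous : Continuous f
  irrational : Irrational f.translationNumber
  monotone : Monotone Φ
  map_add_one : ∀ x, Φ (x + 1) = Φ x + V
  crossRatio_le : ∀ {a b c d : ℝ}, a < b → b < c → c < d →
    crossRatio (f a) (f b) (f c) (f d) ≤ Real.exp (Φ d - Φ a) * crossRatio a b c d

namespace IsControlled

variable {f : CircleDeg1Lift} {Φ : ℝ → ℝ} {V : ℝ}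

lemma nonneg (hf : IsControlled f Φ V) : 0 ≤ V := by
  have hle := hf.monotone (zero_le_one (α := ℝ))
  have heq := hf.map_add_one 0
  rw [zero_add] at heq
  linarith

lemma map_add_int (hf : IsControlled f Φ V) (x : ℝ) (k : ℤ) : Φ (x + k) = Φ x + k * V := by
  induction k with
  | zero => simp
  | succ k ih => push_cast at ih ⊢; rw [← add_assoc, hf.map_add_one, ih]; ring
  | pred k ih =>
    have heq := hf.map_add_one (x + ((-k - 1 : ℤ) : ℝ))
    push_cast at ih heq ⊢
    rw [show x + (-(k : ℝ) - 1) + 1 = x + -k by ring, ih] at heq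
    linarith

lemma reflect (hf : IsControlled f Φ V) : IsControlled (reflect f) (conjNeg Φ) V where
  strictMono := strictMono_conjNeg hf.strictMono
  continuous := (hf.continuous.comp continuous_neg).neg
  irrational := by simpa only [translationNumber_reflect] using hf.irrational.neg
  monotone := monotone_conjNeg hf.monotone
  map_add_one x := by
    have heq := hf.map_add_one (-(x + 1))
    rw [show -(x + 1) + 1 = -x by ring] at heq
    simp only [conjNeg]
    linarith
  crossRatio_le {a b c d} hab hbc hcd := by
    have hle := hf.crossRatio_le (neg_lt_neg hcd) (neg_lt_neg hbc) (neg_lt_neg hab)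
    simp only [coe_reflect, conjNeg, crossRatio_neg] at hle ⊢
    convert hle using 3
    ring

lemma crossRatio_iterate_le (hf : IsControlled f Φ V) {a b c d : ℝ} (hab : a < b) (hbc : b < c)
    (hcd : c < d) (m : ℕ) :
    crossRatio (f^[m] a) (f^[m] b) (f^[m] c) (f^[m] d) ≤
      Real.exp (∑ i ∈ Finset.range m, (Φ (f^[i] d) - Φ (f^[i] a))) * crossRatio a b c d := by
  induction m with
  | zero => simp
  | succ m ih =>
    have hm := hf.strictMono.iterate m
    simp only [Function.iterate_succ_apply']
    rw [Finset.sum_range_succ, add_comm (Finset.sum _ _), Real.exp_add, mul_assoc]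
    exact (hf.crossRatio_le (hm hab) (hm hbc) (hm hcd)).trans
      (mul_le_mul_of_nonneg_left ih (Real.exp_pos _).le)

end IsControlled

lemma sum_sub_le_of_pairwiseDisjoint_Ioc {ι : Type*} {Φ : ℝ → ℝ} (hΦ : Monotone Φ) {s : Finset ι}
    {a b : ι → ℝ} {A B : ℝ} (hAB : A ≤ B) (hab : ∀ i ∈ s, a i < b i) (hA : ∀ i ∈ s, A ≤ a i)
    (hB : ∀ i ∈ s, b i ≤ B) (hd : (s : Set ι).PairwiseDisjoint fun i => Ioc (a i) (b i)) :
    ∑ i ∈ s, (Φ (b i) - Φ (a i)) ≤ Φ B - Φ A := by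
  classical
  induction s using Finset.induction_on_max_value a generalizing B with
  | empty => simpa using hΦ hAB
  | insert i s hi hmax ih =>
    rw [Finset.coe_insert] at hd
    simp only [Finset.forall_mem_insert] at hab hA hB
    have hlast : ∀ j ∈ s, b j ≤ a i := by
      intro j hj
      by_contra! hlt
      have hne : i ≠ j := fun hij => hi (hij ▸ hj)
      have hdisj := Set.disjoint_left.1 (hd (mem_insert i _) (mem_insert_of_mem _ hj) hne)
      exact hdisj (a := min (b i) (b j)) ⟨lt_min hab.1 hlt, min_le_left _ _⟩
        ⟨(hmax j hj).trans_lt (lt_min hab.1 hlt), min_le_right _ _⟩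
    have hrest := ih hA.1 hab.2 hA.2 hlast (hd.subset (subset_insert _ _))
    rw [Finset.sum_insert hi]
    linarith [hΦ hB.1]

lemma exists_isLeast_iterate_eq_add_int {f : CircleDeg1Lift} (hf : StrictMono f)
    (hc : Continuous f) {N : ℕ} (hN : 0 < N) (z a : ℝ) :
    ∃ v, IsLeast {v | a < v ∧ ∃ j < N, ∃ k : ℤ, f^[j] v = z + k} v := by
  choose u hu using fun j => (iterateSub_surjective hc j 0 z).imp fun v hv => by
    simpa [iterateSub_apply] using hv
  have hk : ∀ j, a < u j + (⌊a - u j⌋ + 1 : ℤ) := fun j => by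
    push_cast; linarith [Int.lt_floor_add_one (a - u j)]
  obtain ⟨j₀, hj₀, hmin⟩ := Finset.exists_min_image (Finset.range N)
    (fun j => u j + (⌊a - u j⌋ + 1 : ℤ)) ⟨0, Finset.mem_range.2 hN⟩
  refine ⟨_, ⟨hk j₀, j₀, Finset.mem_range.1 hj₀, _, by rw [iterate_add_int, hu]⟩, ?_⟩
  rintro v ⟨hav, j, hj, k, hv⟩
  have hvu : v = u j + k := (hf.iterate j).injective (by rw [hv, iterate_add_int, hu])
  have hle : ⌊a - u j⌋ + 1 ≤ k := Int.floor_lt.2 (by linarith)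
  calc _ ≤ u j + (⌊a - u j⌋ + 1 : ℤ) := hmin j (Finset.mem_range.2 hj)
    _ ≤ v := by rw [hvu]; gcongr

namespace IsReturnPair

variable {f : CircleDeg1Lift} {q Q : ℕ} {p P : ℤ}

local notation "g" => iterateSub f q p
local notation "h" => iterateSub f Q P

section Order

variable (hr : IsReturnPair f.translationNumber q p Q P)
include hr

lemma lt_return (x : ℝ) : x < g x := lt_iterateSub hr.error_pos x

lemma return_lt_add_one (x : ℝ) : g x < x + 1 := by
  have hlt := iterateSub_lt_iterateSub (f := f) (q := q) (p := p) (q' := 0) (p' := -1)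
    (by push_cast; linarith [hr.error_lt_one]) x
  simpa [iterateSub_apply f 0] using hlt

lemma next_return_lt (x : ℝ) : h x < x := iterateSub_lt hr.next_error_neg x

lemma lt_return_next_return (x : ℝ) : x < g (h x) := by
  rw [iterateSub_iterateSub]
  exact lt_iterateSub (by push_cast; linarith [hr.neg_error_lt]) x

end Order

end IsReturnPair

namespace IsReturnPair

variable {f : CircleDeg1Lift} {q Q : ℕ} {p P : ℤ}

local notation "g" => iterateSub f q p
local notation "h" => iterateSub f Q P

section Control

variable {Φ : ℝ → ℝ} {V : ℝ} (hr : IsReturnPair f.translationNumber q p Q P)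
  (hf : IsControlled f Φ V)
include hr hf

lemma disjoint_Ioc_iterate_sub_floor (x : ℝ) {i j : ℕ} (hij : i < j) (hj : j < Q) :
    Disjoint (Ioc (f^[i] x - ⌊f^[i] x⌋) (f^[i] (g x) - ⌊f^[i] x⌋))
      (Ioc (f^[j] x - ⌊f^[j] x⌋) (f^[j] (g x) - ⌊f^[j] x⌋)) := by
  refine Set.disjoint_left.2 fun y hi hj' => ?_
  have hg : ∀ l (k : ℤ), f^[l] (g x) - k = iterateSub f (l + q) (k + p) x := fun l k => by
    rw [← iterateSub_iterateSub, iterateSub_apply f l]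
  have hlo := hi.1.trans_le hj'.2
  have hhi := hj'.1.trans_le hi.2
  rw [hg, ← iterateSub_apply] at hlo hhi
  have hlo := sub_lt_sub_of_iterateSub_lt_iterateSub hf.irrational hlo
  have hhi := sub_lt_sub_of_iterateSub_lt_iterateSub hf.irrational hhi
  have hbest := hr.error_le_abs (j - i) (by omega) (by omega) (⌊f^[j] x⌋ - ⌊f^[i] x⌋)
  push_cast [Nat.cast_sub hij.le] at hbest hlo hhi
  rcases le_abs.1 hbest with hle | hle <;> linarith

lemma sum_range_sub_le (x : ℝ) :
    ∑ i ∈ Finset.range Q, (Φ (f^[i] (g x)) - Φ (f^[i] x)) ≤ 2 * V := by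
  have hlt : ∀ i, f^[i] x < f^[i] (g x) := fun i => hf.strictMono.iterate i (hr.lt_return x)
  have hsum := sum_sub_le_of_pairwiseDisjoint_Ioc hf.monotone (s := Finset.range Q)
    (a := fun i => f^[i] x - ⌊f^[i] x⌋) (b := fun i => f^[i] (g x) - ⌊f^[i] x⌋)
    (A := 0) (B := (2 : ℤ)) (by norm_num) (fun i _ => by linarith [hlt i])
    (fun i _ => sub_nonneg.2 (Int.floor_le _))
    (fun i _ => by
      rw [iterate_iterateSub]
      push_cast
      linarith [hr.return_lt_add_one (f^[i] x), Int.lt_floor_add_one (f^[i] x)])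
    (fun i hi j hj hne => by
      rcases hne.lt_or_gt with hij | hij
      · exact hr.disjoint_Ioc_iterate_sub_floor hf x hij (Finset.mem_range.1 hj)
      · exact (hr.disjoint_Ioc_iterate_sub_floor hf x hij (Finset.mem_range.1 hi)).symm)
  have hΦ : ∀ y (k : ℤ), Φ (y - k) = Φ y - k * V := fun y k => by
    have := hf.map_add_int (y - k) k
    rw [sub_add_cancel] at this
    linarith
  have hV := hf.map_add_int 0 2
  simp only [zero_add] at hV
  simp only [hΦ, sub_sub_sub_cancel_right, hV] at hsum
  push_cast at hsum
  linarith

lemma sum_range_sub_le_of_le_two_mul (x : ℝ) {m : ℕ} (hm : m ≤ 2 * Q) :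
    ∑ i ∈ Finset.range m, (Φ (f^[i] (g x)) - Φ (f^[i] x)) ≤ 4 * V := by
  have hshift : ∀ i, Φ (f^[Q + i] (g x)) - Φ (f^[Q + i] x) =
      Φ (f^[i] (g (f^[Q] x))) - Φ (f^[i] (f^[Q] x)) := fun i => by
    rw [← iterate_iterateSub, ← Function.iterate_add_apply, ← Function.iterate_add_apply,
      add_comm]
  calc ∑ i ∈ Finset.range m, (Φ (f^[i] (g x)) - Φ (f^[i] x))
      ≤ ∑ i ∈ Finset.range (Q + Q), (Φ (f^[i] (g x)) - Φ (f^[i] x)) :=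
        Finset.sum_le_sum_of_subset_of_nonneg (Finset.range_subset_range.2 (by omega))
          fun i _ _ => sub_nonneg.2 <|
            hf.monotone <| (hf.strictMono.iterate i (hr.lt_return x)).le
    _ ≤ 2 * V + 2 * V := by
        rw [Finset.sum_range_add]
        simp only [hshift]
        exact add_le_add (hr.sum_range_sub_le hf x) (hr.sum_range_sub_le hf (f^[Q] x))
    _ = 4 * V := by ring

variable {a b c d y : ℝ} {m : ℕ}

lemma crossRatio_iterate_le (hya : y ≤ a) (hab : a < b) (hbc : b < c) (hcd : c < d)
    (hdy : d ≤ g (g (g y))) (hm : m ≤ 2 * Q) :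
    crossRatio (f^[m] a) (f^[m] b) (f^[m] c) (f^[m] d) ≤
      Real.exp (12 * V) * crossRatio a b c d := by
  refine (hf.crossRatio_iterate_le hab hbc hcd m).trans <|
    mul_le_mul_of_nonneg_right (Real.exp_le_exp.2 ?_) (crossRatio_pos hab hbc hcd).le
  have hmono : ∀ i {u v : ℝ}, u ≤ v → Φ (f^[i] u) ≤ Φ (f^[i] v) := fun i _ _ huv =>
    hf.monotone ((hf.strictMono.iterate i).monotone huv)
  calc ∑ i ∈ Finset.range m, (Φ (f^[i] d) - Φ (f^[i] a))
      ≤ ∑ i ∈ Finset.range m, (Φ (f^[i] (g (g (g y)))) - Φ (f^[i] y)) :=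
        Finset.sum_le_sum fun i _ => sub_le_sub (hmono i hdy) (hmono i hya)
    _ = ∑ i ∈ Finset.range m, (Φ (f^[i] (g y)) - Φ (f^[i] y)) +
          ∑ i ∈ Finset.range m, (Φ (f^[i] (g (g y))) - Φ (f^[i] (g y))) +
          ∑ i ∈ Finset.range m, (Φ (f^[i] (g (g (g y)))) - Φ (f^[i] (g (g y)))) := by
        simp only [← Finset.sum_add_distrib]
        exact Finset.sum_congr rfl fun i _ => by ring
    _ ≤ 12 * V := by
        linarith [hr.sum_range_sub_le_of_le_two_mul hf y hm,
          hr.sum_range_sub_le_of_le_two_mul hf (g y) hm,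
          hr.sum_range_sub_le_of_le_two_mul hf (g (g y)) hm]

lemma sub_le_mul_of_iterate_sub_le_mul (hya : y ≤ a) (hab : a < b) (hbc : b < c) (hcd : c < d)
    (hdy : d ≤ g (g (g y))) (hm : m ≤ 2 * Q) {s t : ℝ} (hs₀ : 0 ≤ s) (ht₀ : 0 ≤ t)
    (hs : f^[m] c - f^[m] a ≤ s * (f^[m] b - f^[m] a))
    (ht : f^[m] d - f^[m] b ≤ t * (f^[m] d - f^[m] c)) :
    c - a ≤ s * t * Real.exp (12 * V) * (b - a) ∧
      d - b ≤ s * t * Real.exp (12 * V) * (d - c) := by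
  have hfm := hf.strictMono.iterate m
  have hone : 1 ≤ s * t * Real.exp (12 * V) * crossRatio a b c d := by
    rw [mul_assoc (s * t)]
    exact (one_le_mul_crossRatio hs₀ (hfm hab) (hfm hbc) (hfm hcd) hs ht).trans <|
      mul_le_mul_of_nonneg_left (hr.crossRatio_iterate_le hf hya hab hbc hcd hdy hm)
        (mul_nonneg hs₀ ht₀)
  have hpos : 0 ≤ s * t * Real.exp (12 * V) := by positivity
  constructor
  · calc c - a ≤ s * t * Real.exp (12 * V) * crossRatio a b c d * (c - a) :=
          le_mul_of_one_le_left (by linarith) hone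
      _ ≤ _ := by
          rw [mul_assoc _ (crossRatio a b c d)]
          exact mul_le_mul_of_nonneg_left (crossRatio_mul_le_left hab hbc hcd) hpos
  · calc d - b ≤ s * t * Real.exp (12 * V) * crossRatio a b c d * (d - b) :=
          le_mul_of_one_le_left (by linarith) hone
      _ ≤ _ := by
          rw [mul_assoc _ (crossRatio a b c d)]
          exact mul_le_mul_of_nonneg_left (crossRatio_mul_le_right hab hbc hcd) hpos

lemma exists_iterate_le_add_int_le (x z : ℝ) :
    ∃ j ≤ 2 * Q, ∃ k : ℤ, f^[j] x ≤ z + k ∧ z + k ≤ f^[j] (g x) := by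
  obtain ⟨v, ⟨hgv, j, hj, k, hv⟩, hmin⟩ := exists_isLeast_iterate_eq_add_int hf.strictMono
    hf.continuous (Nat.add_pos_left (hr.pos.trans_le hr.le) q) z (g x)
  suffices ∃ v' < v, v ≤ g v' ∧ ∃ j < Q + q, ∃ k : ℤ, f^[j] v' = z + k by
    obtain ⟨v', hlt, hle, j', hj', k', hv'⟩ := this
    have hx : x < v' :=
      (iterateSub_strictMono hf.strictMono q p).lt_iff_lt.1 (hgv.trans_le hle)
    have hgx : v' ≤ g x := by
      by_contra! hcon
      exact hlt.not_ge (hmin ⟨hcon, j', hj', k', hv'⟩)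
    have hmono := (hf.strictMono.iterate j').monotone
    exact ⟨j', by have := hr.le; omega, k', hv' ▸ hmono hx.le, hv' ▸ hmono hgx⟩
  by_cases hjQ : j < Q
  · obtain ⟨w, rfl⟩ := iterateSub_surjective hf.continuous q p v
    refine ⟨w, hr.lt_return w, le_rfl, j + q, by omega, k + p, ?_⟩
    rw [iterate_iterateSub, iterateSub_apply, ← Function.iterate_add_apply, add_comm q] at hv
    push_cast
    linarith
  · refine ⟨h v, hr.next_return_lt v, (hr.lt_return_next_return v).le, j - Q, by omega, k - P, ?_⟩
    rw [iterate_iterateSub, iterateSub_apply, ← Function.iterate_add_apply,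
      Nat.add_sub_cancel' (not_lt.1 hjQ), hv]
    push_cast
    ring

end Control

end IsReturnPair

/-- The constant by which adjacent fundamental domains `[y, g y]` and `[g y, g (g y)]` of a closest
return `g` are comparable when the distortion of cross-ratios is controlled with degree `V`. -/
def returnConst (V : ℝ) : ℝ := (1 + 4 * Real.exp (12 * V)) ^ 2 * Real.exp (12 * V)

lemma one_le_returnConst {V : ℝ} (hV : 0 ≤ V) : 1 ≤ returnConst V :=
  one_le_mul_of_one_le_of_one_le (one_le_pow₀ (by linarith [Real.exp_pos (12 * V)]))
    (Real.one_le_exp (by positivity))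

namespace IsReturnPair

variable {f : CircleDeg1Lift} {q Q : ℕ} {p P : ℤ}

local notation "g" => iterateSub f q p
local notation "h" => iterateSub f Q P

section Comm
variable {Φ : ℝ → ℝ} {V : ℝ} (hr : IsReturnPair f.translationNumber q p Q P)
  (hf : IsControlled f Φ V)
include hr hf

lemma sub_le_of_minimal_displacement {w : ℝ}
    (hmin : ∀ x, g (g (g w)) - g (g w) ≤ g x - x) :
    g (g (g w)) - g w ≤ 4 * Real.exp (12 * V) * (g (g (g w)) - g (g w)) := by
  have hq : ∀ x, f^[q] x = g x + p := fun x => by rw [iterateSub_apply]; ring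
  have hle := (hr.sub_le_mul_of_iterate_sub_le_mul hf le_rfl (hr.lt_return w)
    (hr.lt_return _) (hr.lt_return _) le_rfl (m := q) (by linarith [hr.le])
    zero_le_two zero_le_two
    (by simp only [hq]; linarith [hmin (g w)])
    (by simp only [hq]; linarith [hmin (g (g (g w)))])).2
  linarith

-- The cross-ratio inequality is first applied at the point of least displacement, where the bound
-- on the image side is free, and then carried to `y` by the iterate that covers that point.
lemma return_return_sub_le (y : ℝ) :
    g (g y) - y ≤ returnConst V * (g y - y) ∧
      g (g (g y)) - g y ≤ returnConst V * (g (g (g y)) - g (g y)) := by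
  have hmono := iterateSub_strictMono hf.strictMono q p
  obtain ⟨z, hz⟩ := exists_forall_map_sub_le (iterateSub_continuous hf.continuous q p)
  obtain ⟨w, rfl⟩ := iterateSub_surjective hf.continuous q p z
  obtain ⟨w, rfl⟩ := iterateSub_surjective hf.continuous q p w
  have hw := hr.sub_le_of_minimal_displacement hf hz
  set B := Real.exp (12 * V)
  obtain ⟨j, hj, k, hlo, hhi⟩ := hr.exists_iterate_le_add_int_le hf (g y) (g (g w))
  have hup : f^[j] (g (g y)) ≤ g (g (g w)) + k := by
    rw [iterate_iterateSub f j, ← CircleDeg1Lift.map_add_int]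
    exact hmono.monotone hlo
  have hdown : g w + k ≤ f^[j] (g y) := by
    rw [iterate_iterateSub f j, ← CircleDeg1Lift.map_add_int] at hhi
    exact hmono.le_iff_le.1 hhi
  have hdisp : ∀ x, 4 * B * (g (g (g w)) - g (g w)) ≤ 4 * B * (f^[j] (g x) - f^[j] x) :=
    fun x => by
      rw [iterate_iterateSub]
      exact mul_le_mul_of_nonneg_left (hz _) (by positivity)
  have hconst : returnConst V = (1 + 4 * B) * (1 + 4 * B) * B := by rw [returnConst, sq]
  rw [hconst]
  exact hr.sub_le_mul_of_iterate_sub_le_mul hf le_rfl (hr.lt_return y) (hr.lt_return _)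
    (hr.lt_return _) le_rfl hj (by positivity) (by positivity)
    (by linarith [hdisp y]) (by linarith [hdisp (g (g y))])

lemma return_return_sub_return_le (x : ℝ) : g (g x) - g x ≤ returnConst V * (g x - x) := by
  linarith [(hr.return_return_sub_le hf x).1, hr.lt_return x]

lemma return_sub_le (x : ℝ) : g x - x ≤ returnConst V * (g (g x) - g x) := by
  obtain ⟨y, rfl⟩ := iterateSub_surjective hf.continuous q p x
  linarith [(hr.return_return_sub_le hf y).2, hr.lt_return (g (g y))]

end Comm
end IsReturnPair

/-! ## Gaps at a critical point -/

/-- The constant by which a configuration of four points spanning two fundamental domains is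
controlled after being pulled back by an iterate, see `IsReturnPair.sub_le_of_iterate_eq`. -/
def pullbackConst (V : ℝ) : ℝ :=
  (1 + returnConst V + returnConst V ^ 2) * returnConst V * (1 + returnConst V) *
    Real.exp (12 * V)

/-- The constant bounding the length of `[c, g c]` by that of `[h c, c]` for two consecutive closest
returns `g` and `h` at a critical point `c` of criticality `s`, `K` being the ratio of the constants
in the power law at `c`. -/
def critConst (V K s : ℝ) : ℝ := max 1 ((pullbackConst V * K) ^ (1 / (s - 1)))

/-- A common constant of comparability for all six intervals. -/
def gapConst (V K s : ℝ) : ℝ := returnConst V * (pullbackConst V * critConst V K s)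

lemma returnConst_mul_le_pullbackConst {V : ℝ} (hV : 0 ≤ V) :
    returnConst V * (1 + returnConst V) ≤ pullbackConst V := by
  have hE := one_le_returnConst hV
  have hexp : 1 ≤ Real.exp (12 * V) := Real.one_le_exp (by positivity)
  have hsum : 1 ≤ 1 + returnConst V + returnConst V ^ 2 := by nlinarith
  calc returnConst V * (1 + returnConst V)
      ≤ (1 + returnConst V + returnConst V ^ 2) * (returnConst V * (1 + returnConst V)) :=
        le_mul_of_one_le_left (by positivity) hsum
    _ ≤ _ := by
        rw [pullbackConst, ← mul_assoc]
        exact le_mul_of_one_le_right (by positivity) hexp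

lemma pullbackConst_nonneg {V : ℝ} (hV : 0 ≤ V) : 0 ≤ pullbackConst V := by
  have hE := one_le_returnConst hV
  exact (by positivity : 0 ≤ returnConst V * (1 + returnConst V)).trans
    (returnConst_mul_le_pullbackConst hV)

lemma one_le_critConst (V K s : ℝ) : 1 ≤ critConst V K s := le_max_left _ _

lemma le_rpow_mul_of_one_le_mul {x y A s : ℝ} (hx : 0 < x) (hy : 0 < y) (hA : 0 ≤ A) (hs : 1 < s)
    (h : 1 ≤ A * (x / y) * (y / x) ^ s) : x ≤ A ^ (1 / (s - 1)) * y := by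
  have hyx : 0 < y / x := div_pos hy hx
  have hpow : 1 ≤ A * (y / x) ^ (s - 1) := by
    rwa [Real.rpow_sub_one hyx.ne', div_eq_mul_inv, inv_div, mul_comm (_ ^ s), ← mul_assoc]
  have hroot : 1 ≤ A ^ (1 / (s - 1)) * (y / x) := by
    calc (1 : ℝ) ≤ (A * (y / x) ^ (s - 1)) ^ (1 / (s - 1)) :=
          Real.one_le_rpow hpow (one_div_nonneg.2 (sub_nonneg.2 hs.le))
      _ = A ^ (1 / (s - 1)) * (y / x) := by
          rw [Real.mul_rpow hA (by positivity), ← Real.rpow_mul hyx.le,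
            mul_one_div_cancel (sub_ne_zero.2 hs.ne'), Real.rpow_one]
  rwa [← mul_div_assoc, le_div_iff₀ hx, one_mul] at hroot

namespace IsReturnPair

variable {f : CircleDeg1Lift} {q Q Q' : ℕ} {p P P' : ℤ}

local notation "g" => iterateSub f q p
local notation "h" => iterateSub f Q P

section Gaps

variable {Φ : ℝ → ℝ} {V : ℝ} (hf : IsControlled f Φ V)
include hf

section Next

variable (hr' : IsReturnPair (-f.translationNumber) Q (-P) Q' P')
include hr'

lemma next_return_sub_le (x : ℝ) : h x - h (h x) ≤ returnConst V * (x - h x) := by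
  rw [← translationNumber_reflect] at hr'
  have hle := hr'.return_return_sub_return_le hf.reflect (-x)
  simp only [iterateSub_reflect] at hle
  linarith

lemma sub_next_return_le (x : ℝ) : x - h x ≤ returnConst V * (h x - h (h x)) := by
  rw [← translationNumber_reflect] at hr'
  have hle := hr'.return_sub_le hf.reflect (-x)
  simp only [iterateSub_reflect] at hle
  linarith

end Next

variable (hr : IsReturnPair f.translationNumber q p Q P)
include hr

lemma sub_next_return_le_return_sub (x : ℝ) : x - h x ≤ returnConst V * (g x - x) := by
  obtain ⟨y, rfl⟩ := iterateSub_surjective hf.continuous q p x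
  have hy : y < h (g y) :=
    (iterateSub_strictMono hf.strictMono q p).lt_iff_lt.1 (hr.lt_return_next_return (g y))
  linarith [hr.return_sub_le hf y]

variable (hr' : IsReturnPair (-f.translationNumber) Q (-P) Q' P')
include hr'

lemma next_return_sub_next_return_le {x r : ℝ} (hr₀ : 0 ≤ r) (hx : g x - x ≤ r * (x - h x)) :
    h (g x) - h (h x) ≤
      (1 + returnConst V + returnConst V ^ 2) * returnConst V * r * (h x - h (h x)) := by
  set E := returnConst V
  have hE : 0 ≤ E := zero_le_one.trans (one_le_returnConst hf.nonneg)
  have hJ := hr.sub_next_return_le_return_sub hf x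
  calc h (g x) - h (h x) ≤ (g x - x) + (x - h x) + (h x - h (h x)) := by
        linarith [hr.next_return_lt (g x)]
    _ ≤ (g x - x) + E * (g x - x) + E * (E * (g x - x)) := by
        gcongr
        exact (hr'.next_return_sub_le hf x).trans (by gcongr)
    _ = (1 + E + E ^ 2) * (g x - x) := by ring
    _ ≤ (1 + E + E ^ 2) * (r * (E * (h x - h (h x)))) := by
        gcongr
        exact hx.trans (by gcongr; exact hr'.sub_next_return_le hf x)
    _ = _ := by ring

lemma sub_le_of_iterate_eq {a b d e x y u r : ℝ} {m : ℕ} (hya : y ≤ a) (hab : a < b) (hbd : b < d)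
    (hde : d < e) (hey : e ≤ g (g (g y))) (hm : m ≤ 2 * Q)
    (ha : f^[m] a = h (h x) + u) (hb : f^[m] b = h x + u) (hd : f^[m] d = h (g x) + u)
    (he : f^[m] e = h (g (g x)) + u) (hr₀ : 0 ≤ r) (hx : g x - x ≤ r * (x - h x)) :
    d - a ≤ pullbackConst V * r * (b - a) := by
  have hE : 0 ≤ returnConst V := zero_le_one.trans (one_le_returnConst hf.nonneg)
  have hleft := hr.next_return_sub_next_return_le hf hr' hr₀ hx
  have hright : h (g (g x)) - h x ≤ (1 + returnConst V) * (h (g (g x)) - h (g x)) := by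
    have hle := hr.return_sub_le hf (h x)
    simp only [iterateSub_comm f q Q p P] at hle
    linarith
  have hle := (hr.sub_le_mul_of_iterate_sub_le_mul hf hya hab hbd hde hey hm
    (s := (1 + returnConst V + returnConst V ^ 2) * returnConst V * r) (t := 1 + returnConst V)
    (by positivity) (by positivity) (by simpa only [ha, hb, hd, add_sub_add_right_eq_sub])
    (by simpa only [hb, hd, he, add_sub_add_right_eq_sub])).1
  exact hle.trans_eq (by rw [pullbackConst]; ring)

lemma map_return_sub_map_next_return_le (x : ℝ) :
    f (g x) - f (h x) ≤ pullbackConst V * ((g x - x) / (x - h x)) * (f x - f (h x)) := by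
  have hmono := hf.strictMono
  have hgx := hr.lt_return x
  have hhx := hr.next_return_lt x
  obtain ⟨y, hy⟩ := iterateSub_surjective hf.continuous q p x
  have hyh : y < h x := (iterateSub_strictMono hmono q p).lt_iff_lt.1
    (by rw [hy]; exact hr.lt_return_next_return x)
  have hiter : ∀ t, f^[Q - 1] (f t) = h t + P := fun t => by
    rw [← Function.iterate_succ_apply, Nat.succ_eq_add_one,
      Nat.sub_add_cancel (hr.pos.trans_le hr.le), iterateSub_apply, sub_add_cancel]
  have hcomm : ∀ t, g (f t) = f (g t) := fun t => (iterate_iterateSub f 1 q p t).symm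
  exact hr.sub_le_of_iterate_eq hf hr' (hmono hyh).le (hmono hhx) (hmono hgx)
    (hmono (hr.lt_return _)) (by simp only [hcomm, hy, le_refl]) (m := Q - 1) (by omega)
    (hiter _) (hiter _) (hiter _) (hiter _)
    (div_nonneg (sub_nonneg.2 hgx.le) (sub_nonneg.2 hhx.le))
    (div_mul_cancel₀ _ (sub_pos.2 hhx).ne').ge

/-
By the previous lemma the image of `[h c, g c]` is at most a constant times
`(g c - c) / (c - h c)` as long as the image of `[h c, c]`, while the power law compares the latter
with `((c - h c) / (g c - c)) ^ s` times the image of `[c, g c]`; and `s > 1`.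
-/
lemma return_sub_le_critConst_mul {c s A B : ℝ} (hs : 1 < s) (hA : 0 < A) (hB : 0 ≤ B)
    (hc : PowerLawAt f c s A B) : g c - c ≤ critConst V (B / A) s * (c - h c) := by
  have hI : 0 < g c - c := sub_pos.2 (hr.lt_return c)
  have hJ : 0 < c - h c := sub_pos.2 (hr.next_return_lt c)
  have hfI : 0 < f (g c) - f c := sub_pos.2 (hf.strictMono (hr.lt_return c))
  have hfJ : 0 < f c - f (h c) := sub_pos.2 (hf.strictMono (hr.next_return_lt c))
  have hκ := pullbackConst_nonneg hf.nonneg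
  have hpower : f c - f (h c) ≤
      B / A * ((c - h c) / (g c - c)) ^ s * (f (g c) - f c) := by
    have hlaw := hc.abs_sub_le hA hB (t := h c - c) (u := g c - c)
      (by rw [abs_sub_comm, abs_of_pos hJ]
          linarith [hr.lt_return_next_return c, hr.return_lt_add_one (h c)])
      hI.ne' (by rw [abs_of_pos hI]; linarith [hr.return_lt_add_one c])
    rwa [abs_sub_comm (h c), abs_of_pos hJ, abs_of_pos hI, add_sub_cancel, add_sub_cancel,
      abs_sub_comm, abs_of_pos hfJ, abs_of_pos hfI] at hlaw
  refine (le_rpow_mul_of_one_le_mul hI hJ (mul_nonneg hκ (div_nonneg hB hA.le)) hs ?_).trans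
    (mul_le_mul_of_nonneg_right (le_max_right _ _) hJ.le)
  refine le_of_mul_le_mul_right ?_ hfI
  calc 1 * (f (g c) - f c) ≤ f (g c) - f (h c) := by linarith
    _ ≤ pullbackConst V * ((g c - c) / (c - h c)) *
          (B / A * ((c - h c) / (g c - c)) ^ s * (f (g c) - f c)) :=
        (hr.map_return_sub_map_next_return_le hf hr' c).trans (by gcongr)
    _ = _ := by ring

lemma return_sub_le_mul_return_sub_next_return {x r : ℝ} (hr₀ : 0 ≤ r)
    (hx : g x - x ≤ r * (x - h x)) :
    g x - x ≤ returnConst V * (pullbackConst V * r) * (g x - h (g x)) := by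
  have hiter : ∀ t, f^[Q - q] (g t) = h t + (P - p) := fun t => by
    rw [iterate_iterateSub, iterateSub_apply, ← Function.iterate_add_apply,
      Nat.add_sub_cancel' hr.le, iterateSub_apply]
    ring
  have hle := hr.sub_le_of_iterate_eq hf hr' (y := x) (hr.lt_return_next_return x).le
    (iterateSub_strictMono hf.strictMono q p (hr.next_return_lt x)) (hr.lt_return _)
    (hr.lt_return _) le_rfl (by omega) (hiter _) (hiter _) (hiter _) (hiter _) hr₀ hx
  rw [iterateSub_comm f q Q p P] at hle
  have hE : 0 ≤ returnConst V := zero_le_one.trans (one_le_returnConst hf.nonneg)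
  calc g x - x ≤ returnConst V * (g (g x) - g x) := hr.return_sub_le hf x
    _ ≤ returnConst V * (g (g x) - h (g x)) := by gcongr; exact (hr.next_return_lt _).le
    _ ≤ returnConst V * (pullbackConst V * r * (g x - h (g x))) := by gcongr
    _ = _ := by ring

end Gaps
end IsReturnPair

/-- Two lengths are comparable with constant `C` when each is at most `C` times the other. -/
def Comparable (C x y : ℝ) : Prop := x ≤ C * y ∧ y ≤ C * x

lemma Comparable.mono {C₁ C₂ C x y : ℝ} (hx : 0 ≤ x) (hy : 0 ≤ y) (hxy : x ≤ C₁ * y)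
    (hyx : y ≤ C₂ * x) (h₁ : C₁ ≤ C) (h₂ : C₂ ≤ C) : Comparable C x y :=
  ⟨hxy.trans (mul_le_mul_of_nonneg_right h₁ hy), hyx.trans (mul_le_mul_of_nonneg_right h₂ hx)⟩

lemma Comparable.trans_symm {C x y z : ℝ} (hC : 0 ≤ C) (hxz : Comparable C x z)
    (hyz : Comparable C y z) : Comparable (C * C) x y := by
  simp only [Comparable, mul_assoc]
  exact ⟨hxz.1.trans (mul_le_mul_of_nonneg_left hyz.2 hC),
    hyz.1.trans (mul_le_mul_of_nonneg_left hxz.2 hC)⟩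

lemma Comparable.inv_le_div_and_div_le {C x y : ℝ} (hC : 0 < C) (hy : 0 < y)
    (h : Comparable C x y) : C⁻¹ ≤ x / y ∧ x / y ≤ C :=
  ⟨by rw [le_div_iff₀ hy, inv_mul_le_iff₀ hC]; exact h.2, (div_le_iff₀ hy).2 h.1⟩

lemma Comparable.pos_left {C x y : ℝ} (hC : 0 < C) (hy : 0 < y) (h : Comparable C x y) : 0 < x :=
  pos_of_mul_pos_right (hy.trans_le h.2) hC.le

/-- The length `|I|` of the interval between `x` and its image under the return
`x ↦ f^[q] x - p`. -/
def returnLength (f : CircleDeg1Lift) (q : ℕ) (p : ℤ) (x : ℝ) : ℝ := |iterateSub f q p x - x|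

/-- The lengths of the six intervals built at `c` from two consecutive closest returns, in the order
of the six intervals `I_n`, `I_{n+1}`, `I_n^{q_n}`, `I_n^{q_{n+1}}`, `I_{n+1}^{q_n}`,
`I_n^{q_{n+1}-q_n}`. -/
def sixLengths (f : CircleDeg1Lift) (q : ℕ) (p : ℤ) (Q : ℕ) (P : ℤ) (c : ℝ) : Set ℝ :=
  {returnLength f q p c, returnLength f Q P c, returnLength f q p (iterateSub f q p c),
    returnLength f q p (iterateSub f Q P c), returnLength f Q P (iterateSub f q p c),
    returnLength f q p (iterateSub f (Q - q) (P - p) c)}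

lemma returnLength_reflect (f : CircleDeg1Lift) (q : ℕ) (p : ℤ) (x : ℝ) :
    returnLength (reflect f) q (-p) (-x) = returnLength f q p x := by
  rw [returnLength, returnLength, iterateSub_reflect, ← abs_neg]
  congr 1
  ring

lemma sixLengths_reflect (f : CircleDeg1Lift) (q : ℕ) (p : ℤ) (Q : ℕ) (P : ℤ) (c : ℝ) :
    sixLengths (reflect f) q (-p) Q (-P) (-c) = sixLengths f q p Q P c := by
  have hsub : -P - -p = -(P - p) := by ring
  simp only [sixLengths, hsub, iterateSub_reflect, returnLength_reflect]

lemma one_lt_gapConst {V : ℝ} (hV : 0 ≤ V) (K s : ℝ) : 1 < gapConst V K s := by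
  have hE := one_le_returnConst hV
  have hκ := returnConst_mul_le_pullbackConst hV
  exact one_lt_mul_of_le_of_lt hE <| one_lt_mul_of_lt_of_le (by nlinarith) (one_le_critConst V K s)

lemma returnConst_mul_le_gapConst {V : ℝ} (hV : 0 ≤ V) (K s : ℝ) :
    returnConst V * (1 + returnConst V) ≤ gapConst V K s := by
  have hκ := pullbackConst_nonneg hV
  calc _ ≤ pullbackConst V := returnConst_mul_le_pullbackConst hV
    _ ≤ pullbackConst V * critConst V K s := le_mul_of_one_le_right hκ (one_le_critConst V K s)
    _ ≤ gapConst V K s := le_mul_of_one_le_left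
      (mul_nonneg hκ (zero_le_one.trans (one_le_critConst V K s))) (one_le_returnConst hV)

lemma critConst_mul_le_gapConst {V : ℝ} (hV : 0 ≤ V) (K s : ℝ) :
    critConst V K s * returnConst V ≤ gapConst V K s := by
  have hE := one_le_returnConst hV
  have hκ := returnConst_mul_le_pullbackConst hV
  rw [mul_comm, gapConst]
  gcongr
  exact le_mul_of_one_le_left (zero_le_one.trans (one_le_critConst V K s)) (by nlinarith)

namespace IsReturnPair

variable {f : CircleDeg1Lift} {q Q Q' : ℕ} {p P P' : ℤ}

lemma returnLength_eq_sub (hr : IsReturnPair f.translationNumber q p Q P) (x : ℝ) :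
    returnLength f q p x = iterateSub f q p x - x :=
  abs_of_pos (sub_pos.2 (hr.lt_return x))

lemma returnLength_pos (hr : IsReturnPair f.translationNumber q p Q P) (x : ℝ) :
    0 < returnLength f q p x :=
  abs_pos.2 (sub_pos.2 (hr.lt_return x)).ne'

lemma returnLength_next_eq_sub (hr : IsReturnPair f.translationNumber q p Q P) (x : ℝ) :
    returnLength f Q P x = x - iterateSub f Q P x := by
  rw [returnLength, abs_sub_comm]
  exact abs_of_pos (sub_pos.2 (hr.next_return_lt x))

lemma comparable_returnLength_return {Φ : ℝ → ℝ} {V : ℝ} (hf : IsControlled f Φ V)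
    (hr : IsReturnPair f.translationNumber q p Q P) (x : ℝ) :
    Comparable (returnConst V) (returnLength f q p (iterateSub f q p x))
      (returnLength f q p x) := by
  rw [hr.returnLength_eq_sub, hr.returnLength_eq_sub]
  exact ⟨hr.return_return_sub_return_le hf x, hr.return_sub_le hf x⟩

lemma returnLength_next_return_le {Φ : ℝ → ℝ} {V : ℝ} (hf : IsControlled f Φ V)
    (hr : IsReturnPair f.translationNumber q p Q P) (x : ℝ) :
    returnLength f q p (iterateSub f Q P x) ≤ (1 + returnConst V) * returnLength f q p x := by
  have hmono := iterateSub_strictMono hf.strictMono q p (hr.next_return_lt x)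
  rw [hr.returnLength_eq_sub, hr.returnLength_eq_sub]
  linarith [hr.sub_next_return_le_return_sub hf x]

lemma return_iterateSub_sub (hr : IsReturnPair f.translationNumber q p Q P) (x : ℝ) :
    iterateSub f q p (iterateSub f (Q - q) (P - p) x) = iterateSub f Q P x := by
  rw [iterateSub_iterateSub, Nat.add_sub_cancel' hr.le, add_sub_cancel]

lemma returnLength_le_critConst_mul_next_return {Φ : ℝ → ℝ} {V c s A B : ℝ}
    (hf : IsControlled f Φ V) (hr : IsReturnPair f.translationNumber q p Q P)
    (hr' : IsReturnPair (-f.translationNumber) Q (-P) Q' P') (hs : 1 < s) (hA : 0 < A)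
    (hB : 0 ≤ B) (hc : PowerLawAt f c s A B) :
    returnLength f q p c ≤ critConst V (B / A) s * returnLength f q p (iterateSub f Q P c) := by
  have hM := one_le_critConst V (B / A) s
  have hreturn := hr.lt_return_next_return c
  rw [hr.returnLength_eq_sub, hr.returnLength_eq_sub]
  exact (hr.return_sub_le_critConst_mul hf hr' hs hA hB hc).trans (by gcongr)

lemma comparable_of_mem_sixLengths {Φ : ℝ → ℝ} {V c s A B x : ℝ} (hf : IsControlled f Φ V)
    (hr : IsReturnPair f.translationNumber q p Q P)
    (hr' : IsReturnPair (-f.translationNumber) Q (-P) Q' P') (hs : 1 < s) (hA : 0 < A)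
    (hB : 0 ≤ B) (hc : PowerLawAt f c s A B) (hx : x ∈ sixLengths f q p Q P c) :
    Comparable (gapConst V (B / A) s) x (returnLength f q p c) := by
  have hE := one_le_returnConst hf.nonneg
  have hM := one_le_critConst V (B / A) s
  have hC₁ := returnConst_mul_le_gapConst hf.nonneg (B / A) s
  have hC₂ := critConst_mul_le_gapConst hf.nonneg (B / A) s
  have hnonneg : ∀ q p x, 0 ≤ returnLength f q p x := fun _ _ _ => abs_nonneg _
  have hcrit := hr.return_sub_le_critConst_mul hf hr' hs hA hB hc
  have hup := hr.returnLength_next_return_le hf c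
  have hlow := hr.returnLength_le_critConst_mul_next_return hf hr' hs hA hB hc
  rcases hx with rfl | rfl | rfl | rfl | rfl | rfl
  · exact .mono (C₁ := 1) (C₂ := 1) (hnonneg ..) (hnonneg ..) (by rw [one_mul]) (by rw [one_mul])
      (by nlinarith) (by nlinarith)
  · refine .mono (hnonneg ..) (hnonneg ..) (C₁ := returnConst V) (C₂ := critConst V (B / A) s)
      ?_ ?_ (by nlinarith) (by nlinarith) <;>
      rw [hr.returnLength_eq_sub, hr.returnLength_next_eq_sub]
    · exact hr.sub_next_return_le_return_sub hf c
    · exact hcrit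
  · obtain ⟨h₁, h₂⟩ := hr.comparable_returnLength_return hf c
    exact .mono (hnonneg ..) (hnonneg ..) h₁ h₂ (by nlinarith) (by nlinarith)
  · exact .mono (hnonneg ..) (hnonneg ..) hup hlow (by nlinarith) (by nlinarith)
  · have hle := hr.lt_return_next_return c
    rw [← iterateSub_comm f Q q P p] at hle
    refine .mono (C₁ := 1) (hnonneg ..) (hnonneg ..) ?_ ?_ (by nlinarith) le_rfl <;>
      rw [hr.returnLength_eq_sub, hr.returnLength_next_eq_sub]
    · linarith
    · exact hr.return_sub_le_mul_return_sub_next_return hf hr' (by linarith) hcrit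
  · obtain ⟨h₁, h₂⟩ := hr.comparable_returnLength_return hf (iterateSub f (Q - q) (P - p) c)
    rw [hr.return_iterateSub_sub] at h₁ h₂
    refine .mono (hnonneg ..) (hnonneg ..) (h₂.trans ?_) (hlow.trans ?_) hC₁ hC₂ <;>
      rw [mul_assoc] <;> gcongr

end IsReturnPair

/-! ## Continued fractions -/

section ContinuedFraction

variable {ρ : ℝ}

lemma irrational_iterate_gaussMap (hρ : Irrational ρ) (n : ℕ) : Irrational (gaussMap^[n] ρ) := by
  induction n with
  | zero => exact hρ
  | succ n ih =>
    rw [Function.iterate_succ_apply']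
    exact ih.inv.sub_intCast _

lemma iterate_gaussMap_mem_Ioo (hirr : Irrational ρ) (hmem : ρ ∈ Ioo (0 : ℝ) 1) (n : ℕ) :
    gaussMap^[n] ρ ∈ Ioo (0 : ℝ) 1 := by
  cases n with
  | zero => exact hmem
  | succ n =>
    refine ⟨lt_of_le_of_ne ?_ (irrational_iterate_gaussMap hirr _).ne_zero.symm, ?_⟩ <;>
      rw [Function.iterate_succ_apply']
    · exact Int.fract_nonneg _
    · exact Int.fract_lt_one _

lemma one_le_floor_inv_iterate_gaussMap (hirr : Irrational ρ) (hmem : ρ ∈ Ioo (0 : ℝ) 1) (n : ℕ) :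
    1 ≤ ⌊(gaussMap^[n] ρ)⁻¹⌋ := by
  obtain ⟨hpos, hlt⟩ := iterate_gaussMap_mem_Ioo hirr hmem n
  rw [Int.le_floor, Int.cast_one]
  exact (one_le_inv₀ hpos).2 hlt.le

lemma one_le_cfDigit (hirr : Irrational ρ) (hmem : ρ ∈ Ioo (0 : ℝ) 1) (n : ℕ) :
    1 ≤ cfDigit ρ n := by
  have := one_le_floor_inv_iterate_gaussMap hirr hmem n
  rw [cfDigit]
  omega

lemma cfDigit_eq_inv_sub (hirr : Irrational ρ) (hmem : ρ ∈ Ioo (0 : ℝ) 1) (n : ℕ) :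
    (cfDigit ρ n : ℝ) = (gaussMap^[n] ρ)⁻¹ - gaussMap^[n + 1] ρ := by
  have hfloor : ((cfDigit ρ n : ℕ) : ℤ) = ⌊(gaussMap^[n] ρ)⁻¹⌋ :=
    Int.toNat_of_nonneg (zero_le_one.trans (one_le_floor_inv_iterate_gaussMap hirr hmem n))
  rw [Function.iterate_succ_apply', gaussMap, Int.self_sub_fract, ← hfloor, Int.cast_natCast]

lemma qDen_pos (hirr : Irrational ρ) (hmem : ρ ∈ Ioo (0 : ℝ) 1) : ∀ n, 0 < qDen ρ n
  | 0 => Nat.one_pos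
  | 1 => one_le_cfDigit hirr hmem 0
  | n + 2 => Nat.add_pos_right _ (qDen_pos hirr hmem n)

lemma qDen_le_succ (hirr : Irrational ρ) (hmem : ρ ∈ Ioo (0 : ℝ) 1) (n : ℕ) :
    qDen ρ n ≤ qDen ρ (n + 1) := by
  cases n with
  | zero => exact one_le_cfDigit hirr hmem 0
  | succ n =>
    exact (Nat.le_mul_of_pos_left _ (one_le_cfDigit hirr hmem (n + 1))).trans
      (Nat.le_add_right _ _)

/-- The approximation error `|q_n ρ - p_n|` of the `n`-th convergent; the sign of `q_n ρ - p_n` is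
`(-1) ^ n`. -/
def cfError (ρ : ℝ) (n : ℕ) : ℝ := (-1) ^ n * (qDen ρ n * ρ - pNum ρ n)

lemma cfError_succ (hirr : Irrational ρ) (hmem : ρ ∈ Ioo (0 : ℝ) 1) (n : ℕ) :
    cfError ρ (n + 1) = gaussMap^[n + 1] ρ * cfError ρ n := by
  induction n with
  | zero =>
    have hdigit := cfDigit_eq_inv_sub hirr hmem 0
    have hρ := hmem.1.ne'
    simp only [Function.iterate_zero, id] at hdigit
    simp only [cfError, qDen, pNum, hdigit]
    field_simp
    push_cast
    ring
  | succ n ih =>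
    have hne := (iterate_gaussMap_mem_Ioo hirr hmem (n + 1)).1.ne'
    have hrec : cfError ρ (n + 1 + 1) = cfError ρ n - cfDigit ρ (n + 1) * cfError ρ (n + 1) := by
      simp only [cfError, qDen, pNum]
      push_cast
      ring
    rw [hrec, cfDigit_eq_inv_sub hirr hmem, ih]
    field_simp
    ring

lemma cfError_mem_Ioo (hirr : Irrational ρ) (hmem : ρ ∈ Ioo (0 : ℝ) 1) (n : ℕ) :
    cfError ρ n ∈ Ioo (0 : ℝ) 1 := by
  induction n with
  | zero => simpa [cfError, qDen, pNum] using hmem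
  | succ n ih =>
    obtain ⟨hpos, hlt⟩ := iterate_gaussMap_mem_Ioo hirr hmem (n + 1)
    rw [cfError_succ hirr hmem]
    exact ⟨mul_pos hpos ih.1, mul_lt_one_of_nonneg_of_lt_one_left hpos.le hlt ih.2.le⟩

lemma cfError_succ_lt (hirr : Irrational ρ) (hmem : ρ ∈ Ioo (0 : ℝ) 1) (n : ℕ) :
    cfError ρ (n + 1) < cfError ρ n := by
  rw [cfError_succ hirr hmem]
  exact mul_lt_of_lt_one_left (cfError_mem_Ioo hirr hmem n).1
    (iterate_gaussMap_mem_Ioo hirr hmem (n + 1)).2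

lemma qDen_mul_pNum_sub (ρ : ℝ) (n : ℕ) :
    (qDen ρ n : ℤ) * pNum ρ (n + 1) - qDen ρ (n + 1) * pNum ρ n = (-1) ^ n := by
  induction n with
  | zero => simp [qDen, pNum]
  | succ n ih =>
    simp only [qDen, pNum]
    push_cast
    linear_combination -ih

/-- If `u ≠ 0` then `v` has the opposite sign, so that no cancellation occurs. -/
lemma le_abs_mul_sub_mul {q Q u v : ℤ} {a b : ℝ} (hq : 0 < q) (ha : 0 ≤ a) (hb : 0 ≤ b)
    (hpos : 0 < u * q + v * Q) (hlt : u * q + v * Q < Q) : a ≤ |u * a - v * b| := by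
  have hQ : 0 < Q := hpos.trans hlt
  rcases lt_trichotomy u 0 with hu | rfl | hu
  · have hv : 0 ≤ v := by by_contra! hv; nlinarith
    have hu' : (u : ℝ) ≤ -1 := by exact_mod_cast Int.le_sub_one_of_lt hu
    have hv' : (0 : ℝ) ≤ v := by exact_mod_cast hv
    exact le_trans (by nlinarith) (neg_le_abs _)
  · rw [zero_mul, zero_add] at hpos hlt
    have hv : 0 < v := pos_of_mul_pos_left hpos hQ.le
    exact absurd hlt (le_mul_of_one_le_left hQ.le hv).not_gt
  · have hv : v ≤ 0 := by by_contra! hv; nlinarith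
    have hu' : (1 : ℝ) ≤ u := by exact_mod_cast hu
    have hv' : (v : ℝ) ≤ 0 := by exact_mod_cast hv
    exact le_trans (by nlinarith) (le_abs_self _)

lemma cfError_le_abs (hirr : Irrational ρ) (hmem : ρ ∈ Ioo (0 : ℝ) 1) (n : ℕ) {j : ℕ}
    (hj : 0 < j) (hjQ : j < qDen ρ (n + 1)) (k : ℤ) : cfError ρ n ≤ |j * ρ - k| := by
  have hdet := qDen_mul_pNum_sub ρ n
  have hsq : (-1 : ℤ) ^ n * (-1) ^ n = 1 := by rw [← mul_pow]; simp
  have hq : (0 : ℤ) < qDen ρ n := by exact_mod_cast qDen_pos hirr hmem n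
  set q := qDen ρ n with hq_def
  set Q := qDen ρ (n + 1) with hQ_def
  set p := pNum ρ n with hp_def
  set P := pNum ρ (n + 1) with hP_def
  -- `(j, k) = u (q, p) + v (Q, P)`, solved by Cramer's rule
  set u : ℤ := (-1) ^ n * (j * P - k * Q) with hu
  set v : ℤ := (-1) ^ n * (q * k - p * j) with hv
  have hj_eq : (j : ℤ) = u * q + v * Q := by
    rw [hu, hv]
    linear_combination -((-1) ^ n * j : ℤ) * hdet - j * hsq
  have hk_eq : k = u * p + v * P := by
    rw [hu, hv]
    linear_combination -((-1) ^ n * k : ℤ) * hdet - k * hsq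
  have herror : (-1) ^ n * (j * ρ - k) = u * cfError ρ n - v * cfError ρ (n + 1) := by
    have hjR : (j : ℝ) = u * q + v * Q := by exact_mod_cast hj_eq
    have hkR : (k : ℝ) = u * p + v * P := by exact_mod_cast hk_eq
    rw [cfError, cfError, pow_succ, hjR, hkR, hq_def, hQ_def, hp_def, hP_def]
    ring
  calc cfError ρ n ≤ |u * cfError ρ n - v * cfError ρ (n + 1)| :=
        le_abs_mul_sub_mul hq (cfError_mem_Ioo hirr hmem n).1.le
          (cfError_mem_Ioo hirr hmem (n + 1)).1.le (by rw [← hj_eq]; exact_mod_cast hj)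
          (by rw [← hj_eq]; exact_mod_cast hjQ)
    _ = |j * ρ - k| := by rw [← herror, abs_mul, abs_neg_one_pow, one_mul]

lemma isReturnPair_convergents (hirr : Irrational ρ) (hmem : ρ ∈ Ioo (0 : ℝ) 1) (n : ℕ) :
    IsReturnPair ((-1) ^ n * ρ) (qDen ρ n) ((-1) ^ n * (pNum ρ n : ℤ))
      (qDen ρ (n + 1)) ((-1) ^ n * (pNum ρ (n + 1) : ℤ)) := by
  have herror : qDen ρ n * ((-1) ^ n * ρ) - (((-1) ^ n * (pNum ρ n : ℤ) : ℤ) : ℝ)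
      = cfError ρ n := by
    rw [cfError]; push_cast; ring
  have herror' : qDen ρ (n + 1) * ((-1) ^ n * ρ) - (((-1) ^ n * (pNum ρ (n + 1) : ℤ) : ℤ) : ℝ)
      = -cfError ρ (n + 1) := by
    rw [cfError]; push_cast; ring
  obtain ⟨hpos, hlt⟩ := cfError_mem_Ioo hirr hmem n
  refine ⟨qDen_pos hirr hmem n, qDen_le_succ hirr hmem n, ?_, ?_, ?_, ?_, fun j hj hjQ k => ?_⟩ <;>
    simp only [herror, herror', neg_neg_iff_pos, neg_lt_neg_iff]
  · exact hpos
  · exact hlt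
  · exact (cfError_mem_Ioo hirr hmem (n + 1)).1
  · exact cfError_succ_lt hirr hmem n
  · have hsq : (-1 : ℝ) ^ n * (-1) ^ n = 1 := by rw [← mul_pow]; simp
    calc cfError ρ n ≤ |j * ρ - ((-1) ^ n * k : ℤ)| := cfError_le_abs hirr hmem n hj hjQ _
      _ = |(-1) ^ n * (j * ((-1) ^ n * ρ) - k)| := by
        congr 1
        push_cast
        linear_combination -(j * ρ) * hsq
      _ = |j * ((-1) ^ n * ρ) - k| := by rw [abs_mul, abs_neg_one_pow, one_mul]

end ContinuedFraction

/-! ## Multicritical circle maps -/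

section Periodic

variable {g F : ℝ → ℝ}

lemma periodic_deriv {C : ℝ} (hg : ∀ x, g (x + 1) = g x + C) : Function.Periodic (deriv g) 1 :=
  fun x => by rw [← deriv_comp_add_const, funext hg, deriv_add_const]

lemma exists_forall_abs_le_of_periodic (hg : Continuous g) (hper : Function.Periodic g 1) :
    ∃ M, ∀ x, |g x| ≤ M := by
  obtain ⟨M, hM⟩ := (hper.isBounded_of_continuous one_ne_zero hg).exists_norm_le
  exact ⟨M, fun x => hM _ (mem_range_self x)⟩

lemma exists_pos_forall_lt_imp_exists_zero (hg : Continuous g) (hper : Function.Periodic g 1)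
    (hg0 : ∀ x, 0 ≤ g x) {η : ℝ} (hη : 0 < η) :
    ∃ m, 0 < m ∧ ∀ x, g x < m → ∃ z, g z = 0 ∧ |x - z| < η := by
  set U := Metric.thickening η (g ⁻¹' {0})
  have hpos : ∀ x ∈ Icc 0 1 \ U, 0 < g x := fun x hx => (hg0 x).lt_of_ne fun h0 =>
    hx.2 (Metric.self_subset_thickening hη _ h0.symm)
  obtain ⟨m, hm, hle⟩ := (isCompact_Icc.diff Metric.isOpen_thickening).exists_forall_le'
    hg.continuousOn hpos
  refine ⟨m, hm, fun x hx => ?_⟩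
  have hfract : Int.fract x ∈ U := by
    by_contra hU
    have := hle _ ⟨⟨Int.fract_nonneg x, (Int.fract_lt_one x).le⟩, hU⟩
    rw [Int.fract, ← mul_one (⌊x⌋ : ℝ), hper.sub_int_mul_eq] at this
    exact this.not_gt hx
  obtain ⟨z, hz, hdist⟩ := Metric.mem_thickening_iff.1 hfract
  refine ⟨z + ⌊x⌋ * 1, (hper.int_mul ⌊x⌋ z).trans hz, ?_⟩
  rwa [Real.dist_eq, Int.fract, sub_sub, add_comm, ← mul_one (⌊x⌋ : ℝ)] at hdist

end Periodic

lemma exists_pos_forall_mul_sub_le {f : CircleDeg1Lift} (hcont : Continuous f)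
    (hmono : StrictMono f) {δ : ℝ} (hδ : 0 < δ) :
    ∃ m, 0 < m ∧ ∀ a d, δ ≤ d - a → m * (d - a) ≤ f d - f a := by
  have hinc : ∀ x, 0 < f (x + δ) - f x := fun x => sub_pos.2 (hmono (lt_add_of_pos_right x hδ))
  obtain ⟨m, hm, hzero⟩ := exists_pos_forall_lt_imp_exists_zero (g := fun x => f (x + δ) - f x)
    (by fun_prop) (fun x => by simp only [add_right_comm x 1 δ, f.map_add_one]; ring)
    (fun x => (hinc x).le) one_pos
  have hle : ∀ x, m ≤ f (x + δ) - f x := fun x => by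
    by_contra! hlt
    obtain ⟨z, hz, -⟩ := hzero x hlt
    exact (hinc z).ne' hz
  refine ⟨min m (1 / 2), by positivity, fun a d had => ?_⟩
  rcases le_total (d - a) 1 with h1 | h1
  · calc min m (1 / 2) * (d - a) ≤ m * 1 :=
          mul_le_mul (min_le_left _ _) h1 (by linarith) hm.le
      _ ≤ f (a + δ) - f a := by rw [mul_one]; exact hle a
      _ ≤ f d - f a := sub_le_sub_right (f.monotone (by linarith)) _
  · have hfloor : (1 : ℝ) ≤ ⌊d - a⌋ := by exact_mod_cast Int.le_floor.2 (by exact_mod_cast h1)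
    calc min m (1 / 2) * (d - a) ≤ 1 / 2 * (d - a) := by gcongr; exact min_le_right _ _
      _ ≤ ⌊d - a⌋ := by linarith [Int.lt_floor_add_one (d - a)]
      _ = f (a + ⌊d - a⌋) - f a := by rw [f.map_add_int, add_sub_cancel_left]
      _ ≤ f d - f a := sub_le_sub_right (f.monotone (by linarith [Int.floor_le (d - a)])) _

lemma periodic_schwarzianDeriv {F : ℝ → ℝ} {C : ℝ} (hF : ∀ x, F (x + 1) = F x + C) :
    Function.Periodic (schwarzianDeriv F) 1 := by
  have h₁ := periodic_deriv hF
  have h₂ := periodic_deriv (g := deriv F) (C := 0) fun x => by rw [h₁ x, add_zero]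
  have hquot := periodic_deriv (g := fun y => deriv (deriv F) y / deriv F y) (C := 0)
    fun x => by rw [h₁ x, h₂ x, add_zero]
  exact fun x => by rw [schwarzianDeriv, schwarzianDeriv, hquot x, h₁ x, h₂ x]

namespace MCM

variable (f : MCM)

/-- The lift of a multicritical circle map as an element of the monoid of degree one lifts. -/
def lift : CircleDeg1Lift := ⟨⟨f.F, f.mono.monotone⟩, f.deg1⟩

lemma translationNumber_lift {f : MCM} {ρ : ℝ} (h : HasRotationNumber f.F ρ) :
    f.lift.translationNumber = ρ :=
  f.lift.translationNumber_eq_of_tendsto₀ h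

lemma differentiable : Differentiable ℝ f.F := f.smooth.differentiable (by norm_num)

lemma contDiff_deriv : ContDiff ℝ 2 (deriv f.F) :=
  (contDiff_succ_iff_deriv (n := 2).1 (by exact_mod_cast f.smooth)).2.2

lemma continuous_deriv_deriv : Continuous (deriv (deriv f.F)) :=
  f.contDiff_deriv.continuous_deriv (by norm_num)

lemma periodic_deriv : Function.Periodic (deriv f.F) 1 := _root_.periodic_deriv f.deg1

lemma periodic_deriv_deriv : Function.Periodic (deriv (deriv f.F)) 1 :=
  _root_.periodic_deriv (C := 0) fun x => by rw [f.periodic_deriv x, add_zero]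

/-- The neighborhood of the lifted critical point `c i + n` obtained by translating `W i`. -/
def critNhd (i : Fin f.N) (n : ℤ) : Set ℝ := {x | x - n ∈ f.W i}

lemma derivPowerLaw_critNhd (i : Fin f.N) (n : ℤ) :
    DerivPowerLaw f.F (f.c i + n) (f.s i - 1) (f.al i) (f.be i) (f.critNhd i n) := by
  intro x hx
  rw [← f.periodic_deriv.sub_int_mul_eq n, mul_one, ← sub_sub, sub_right_comm]
  by_cases hc : x - n = f.c i
  · simp [hc, f.isCrit i, Real.zero_rpow (sub_pos.2 (f.s_gt_one i)).ne']
  · exact ⟨(f.powerLaw i _ hx hc).1.le, (f.powerLaw i _ hx hc).2.le⟩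

lemma schwarzianDeriv_nonpos {i : Fin f.N} {n : ℤ} {x : ℝ} (hx : x ∈ f.critNhd i n)
    (hc : x ≠ f.c i + n) : schwarzianDeriv f.F x ≤ 0 := by
  rw [← (periodic_schwarzianDeriv f.deg1).sub_int_mul_eq n, mul_one]
  exact (f.negSchwarzian i _ hx fun h => hc (sub_eq_iff_eq_add.1 h)).le

lemma deriv_pos {i : Fin f.N} {n : ℤ} {x : ℝ} (hx : x ∈ f.critNhd i n) (hc : x ≠ f.c i + n) :
    0 < deriv f.F x :=
  (mul_pos (f.al_pos i) (Real.rpow_pos_of_pos (abs_pos.2 (sub_ne_zero.2 hc)) _)).trans_le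
    (f.derivPowerLaw_critNhd i n x hx).1

lemma exists_powerLawAt (i : Fin f.N) :
    ∃ A B : ℝ, 0 < A ∧ 0 ≤ B ∧ PowerLawAt f.F (f.c i) (f.s i) A B := by
  obtain ⟨ε, hε, hball⟩ := Metric.isOpen_iff.1 (f.W_open i) _ (f.c_mem_W i)
  have hα := f.al_pos i
  have hβ := hα.trans (f.al_lt_be i)
  have hη : 0 < min ε 1 := lt_min hε one_pos
  have hlaw : DerivPowerLaw f.F (f.c i) (f.s i - 1) (f.al i) (f.be i)
      (Ioo (f.c i - min ε 1) (f.c i + min ε 1)) := by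
    have := f.derivPowerLaw_critNhd i 0
    rw [Int.cast_zero, add_zero] at this
    refine this.mono fun x hx => hball ?_
    rw [Int.cast_zero, sub_zero, Real.ball_eq_Ioo]
    exact ⟨by linarith [hx.1, min_le_left ε 1], by linarith [hx.2, min_le_left ε 1]⟩
  have := powerLawAt_of_derivPowerLaw hlaw f.differentiable f.mono.monotone f.deg1
    (sub_pos.2 (f.s_gt_one i)).le hα.le hβ.le hη (min_le_right _ _)
  rw [sub_add_cancel] at this
  exact ⟨_, _, by positivity, by positivity, this⟩

lemma exists_forall_ball_subset_W : ∃ η, 0 < η ∧ ∀ i, Metric.ball (f.c i) η ⊆ f.W i := by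
  have : Nonempty (Fin f.N) := ⟨⟨0, f.N_pos⟩⟩
  choose ε hε hball using fun i => Metric.isOpen_iff.1 (f.W_open i) _ (f.c_mem_W i)
  obtain ⟨i, hi⟩ := Finite.exists_min ε
  exact ⟨ε i, hε i, fun j => (Metric.ball_subset_ball (hi j)).trans (hball j)⟩

/-- Intervals fall into three classes: long ones, those inside a critical neighborhood, and those on
which the derivative is bounded below. -/
lemma exists_interval_trichotomy : ∃ η m : ℝ, 0 < η ∧ 0 < m ∧ ∀ a d, η ≤ d - a ∨
    (∃ i n, Icc a d ⊆ f.critNhd i n) ∨ ∀ x ∈ Icc a d, m ≤ deriv f.F x := by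
  obtain ⟨η, hη, hball⟩ := f.exists_forall_ball_subset_W
  obtain ⟨m, hm, hzero⟩ := exists_pos_forall_lt_imp_exists_zero f.contDiff_deriv.continuous
    f.periodic_deriv (fun x => f.mono.monotone.deriv_nonneg) (half_pos hη)
  refine ⟨η / 2, m, half_pos hη, hm, fun a d => ?_⟩
  by_contra! h
  obtain ⟨hshort, hcrit, x, hx, hlt⟩ := h
  obtain ⟨z, hz, hxz⟩ := hzero x hlt
  obtain ⟨i, n, rfl⟩ := f.critOnly z hz
  refine hcrit i n fun y hy => hball i ?_
  rw [abs_lt] at hxz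
  rw [Real.ball_eq_Ioo]
  constructor <;> linarith [hx.1, hx.2, hy.1, hy.2]

lemma exists_derivLeSlope : ∃ K, 1 ≤ K ∧ DerivLeSlope f.F K univ := by
  obtain ⟨η, m, hη, hm, htri⟩ := f.exists_interval_trichotomy
  obtain ⟨m', hm', hlong⟩ := exists_pos_forall_mul_sub_le (f := f.lift) f.smooth.continuous
    f.mono hη
  obtain ⟨M, hM⟩ := exists_forall_abs_le_of_periodic f.contDiff_deriv.continuous f.periodic_deriv
  have hM0 : 0 ≤ M := (abs_nonneg _).trans (hM 0)
  have hderiv : ∀ x, deriv f.F x ≤ M := fun x => (le_abs_self _).trans (hM x)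
  set L : Fin f.N → ℝ := fun i => 4 * 2 ^ (f.s i - 1) * f.be i / f.al i
  have hL : ∀ i, 0 ≤ L i := fun i =>
    have hα := f.al_pos i
    have hβ := hα.trans (f.al_lt_be i)
    by positivity
  have hmM : 0 ≤ M / m := by positivity
  have hmM' : 0 ≤ M / m' := by positivity
  have hsum : 0 ≤ ∑ i, L i := Finset.sum_nonneg fun i _ => hL i
  refine ⟨1 + M / m + M / m' + ∑ i, L i, by linarith, fun u _ v _ huv x hx => ?_⟩
  have hmono := f.mono.monotone
  rcases htri u v with h | ⟨i, n, h⟩ | h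
  · calc deriv f.F x * (v - u) ≤ M * (v - u) :=
          mul_le_mul_of_nonneg_right (hderiv x) (sub_nonneg.2 huv.le)
      _ = M / m' * (m' * (v - u)) := by rw [← mul_assoc, div_mul_cancel₀ M hm'.ne']
      _ ≤ M / m' * (f.F v - f.F u) := mul_le_mul_of_nonneg_left (hlong u v h) hmM'
      _ ≤ _ := mul_le_mul_of_nonneg_right (by linarith) (sub_nonneg.2 (hmono huv.le))
  · have hα := f.al_pos i
    have hslope : DerivLeSlope f.F (L i) (Icc u v) :=
      ((f.derivPowerLaw_critNhd i n).mono h).derivLeSlope ordConnected_Icc f.differentiable hmono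
        (sub_pos.2 (f.s_gt_one i)).le hα (hα.trans (f.al_lt_be i)).le
    have hi := Finset.single_le_sum (fun j _ => hL j) (Finset.mem_univ i)
    exact hslope.mono hmono (by linarith) u ⟨le_rfl, huv.le⟩ v ⟨huv.le, le_rfl⟩ huv x hx
  · have hslope : DerivLeSlope f.F (M / m) (Icc u v) :=
      .of_le_deriv_of_deriv_le f.differentiable ordConnected_Icc hm hM0 h fun y _ => hderiv y
    exact hslope.mono hmono (by linarith) u ⟨le_rfl, huv.le⟩ v ⟨huv.le, le_rfl⟩ huv x hx

/-- A step function whose increment over `(a, d]` is the number of lifted critical points in that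
interval. -/
def critCount (x : ℝ) : ℝ := ∑ i, (⌊x - f.c i⌋ : ℝ)

lemma monotone_critCount : Monotone f.critCount := fun x y hxy =>
  Finset.sum_le_sum fun i _ => by exact_mod_cast Int.floor_le_floor (sub_le_sub_right hxy _)

lemma critCount_add_one (x : ℝ) : f.critCount (x + 1) = f.critCount x + f.N := by
  simp [critCount, add_sub_right_comm, Finset.sum_add_distrib]

lemma one_le_critCount_sub {i : Fin f.N} {n : ℤ} {a d : ℝ} (h : f.c i + n ∈ Ioc a d) :
    1 ≤ f.critCount d - f.critCount a := by
  have had : a ≤ d := (h.1.trans_le h.2).le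
  have hjump : (1 : ℝ) ≤ ⌊d - f.c i⌋ - ⌊a - f.c i⌋ := by
    have ha : ⌊a - f.c i⌋ < n := Int.floor_lt.2 (by linarith [h.1])
    have hd : n ≤ ⌊d - f.c i⌋ := Int.le_floor.2 (by linarith [h.2])
    exact_mod_cast (by omega : 1 ≤ ⌊d - f.c i⌋ - ⌊a - f.c i⌋)
  rw [critCount, critCount, ← Finset.sum_sub_distrib]
  exact hjump.trans (Finset.single_le_sum (f := fun j => (⌊d - f.c j⌋ : ℝ) - ⌊a - f.c j⌋)
    (fun j _ => sub_nonneg.2 (by exact_mod_cast Int.floor_le_floor (sub_le_sub_right had _)))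
    (Finset.mem_univ i))

lemma crossRatio_le_of_notMem_Ioc {i : Fin f.N} {n : ℤ} {a b c d : ℝ} (hab : a < b) (hbc : b < c)
    (hcd : c < d) (hW : Icc a d ⊆ f.critNhd i n) (hn : f.c i + n ∉ Ioc a d) :
    crossRatio (f.F a) (f.F b) (f.F c) (f.F d) ≤ crossRatio a b c d :=
  have hne : ∀ x ∈ Ioo a d, x ≠ f.c i + n := fun _ hx h => hn (h ▸ Ioo_subset_Ioc_self hx)
  crossRatio_le_of_schwarzianDeriv_nonpos f.smooth hab hbc hcd
    (fun x hx => f.deriv_pos (hW (Ioo_subset_Icc_self hx)) (hne x hx))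
    fun x hx => f.schwarzianDeriv_nonpos (hW (Ioo_subset_Icc_self hx)) (hne x hx)

lemma exists_crossRatio_le_exp_mul : ∃ k : ℝ, 0 ≤ k ∧ ∀ a b c d, a < b → b < c → c < d →
    crossRatio (f.F a) (f.F b) (f.F c) (f.F d) ≤ Real.exp k * crossRatio a b c d := by
  obtain ⟨K, hK, hslope⟩ := f.exists_derivLeSlope
  refine ⟨Real.log (K ^ 2), Real.log_nonneg (one_le_pow₀ hK), fun a b c d hab hbc hcd => ?_⟩
  rw [Real.exp_log (by positivity)]
  exact (hslope.anti (subset_univ _)).crossRatio_le f.differentiable f.mono (by linarith) hab hbc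
    hcd

lemma exists_crossRatio_le : ∃ A k : ℝ, 0 ≤ A ∧ 0 ≤ k ∧ ∀ a b c d, a < b → b < c → c < d →
    crossRatio (f.F a) (f.F b) (f.F c) (f.F d) ≤
      Real.exp (A * (d - a) + k * (f.critCount d - f.critCount a)) * crossRatio a b c d := by
  obtain ⟨η, m, hη, hm, htri⟩ := f.exists_interval_trichotomy
  obtain ⟨k, hk, huniform⟩ := f.exists_crossRatio_le_exp_mul
  obtain ⟨M, hM⟩ := exists_forall_abs_le_of_periodic f.continuous_deriv_deriv f.periodic_deriv_deriv
  have hM0 : 0 ≤ M := (abs_nonneg _).trans (hM 0)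
  refine ⟨2 * (M / m) + k / η, k, by positivity, hk, fun a b c d hab hbc hcd => ?_⟩
  have had : 0 < d - a := by linarith
  have hcount : 0 ≤ k * (f.critCount d - f.critCount a) :=
    mul_nonneg hk (sub_nonneg.2 (f.monotone_critCount (by linarith)))
  have hA : 0 ≤ 2 * (M / m) * (d - a) := by positivity
  have hA' : 0 ≤ k / η * (d - a) := by positivity
  suffices h : ∃ e ≤ (2 * (M / m) + k / η) * (d - a) + k * (f.critCount d - f.critCount a),
      crossRatio (f.F a) (f.F b) (f.F c) (f.F d) ≤ Real.exp e * crossRatio a b c d by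
    obtain ⟨e, he, hle⟩ := h
    exact hle.trans (mul_le_mul_of_nonneg_right (Real.exp_le_exp.2 he)
      (crossRatio_pos hab hbc hcd).le)
  rcases htri a d with h | ⟨i, n, h⟩ | h
  · have : k ≤ k / η * (d - a) := by
      rw [div_mul_eq_mul_div, le_div_iff₀ hη]
      exact mul_le_mul_of_nonneg_left h hk
    exact ⟨k, by linarith, huniform a b c d hab hbc hcd⟩
  · by_cases hn : f.c i + n ∈ Ioc a d
    · exact ⟨k, by nlinarith [f.one_le_critCount_sub hn], huniform a b c d hab hbc hcd⟩
    · refine ⟨0, by linarith, ?_⟩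
      rw [Real.exp_zero, one_mul]
      exact f.crossRatio_le_of_notMem_Ioc hab hbc hcd h hn
  · have hslope := DerivLeSlope.of_abs_deriv_deriv_le f.differentiable
      (f.contDiff_deriv.differentiable (by norm_num)) hm hM h
    have := hslope.crossRatio_le f.differentiable f.mono (Real.exp_pos _).le hab hbc hcd
    rw [← Real.exp_nat_mul, Nat.cast_two, ← mul_assoc] at this
    exact ⟨2 * (M / m) * (d - a), by linarith, this⟩

lemma exists_isControlled (hirr : Irrational f.lift.translationNumber) :
    ∃ Φ V, IsControlled f.lift Φ V := by
  obtain ⟨A, k, hA, hk, hcross⟩ := f.exists_crossRatio_le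
  refine ⟨fun x => A * x + k * f.critCount x, A + k * f.N, f.mono, f.smooth.continuous, hirr,
    fun x y hxy => add_le_add (mul_le_mul_of_nonneg_left hxy hA)
      (mul_le_mul_of_nonneg_left (f.monotone_critCount hxy) hk),
    fun x => by simp only [critCount_add_one]; ring, fun hab hbc hcd => ?_⟩
  rw [add_sub_add_comm, ← mul_sub, ← mul_sub]
  exact hcross _ _ _ _ hab hbc hcd

end MCM

namespace MCM

variable {f : MCM} {ρ : ℝ}

lemma atomLen_eq_returnLength (f : MCM) (ρ x : ℝ) (ℓ j : ℕ) (m : ℤ) :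
    atomLen f.F ρ x ℓ j = returnLength f.lift (qDen ρ ℓ) (pNum ρ ℓ) (iterateSub f.lift j m x) := by
  change |f.lift^[j + qDen ρ ℓ] x - (pNum ρ ℓ : ℝ) - f.lift^[j] x| = _
  rw [returnLength, iterateSub_iterateSub, iterateSub_apply, iterateSub_apply, add_comm j,
    Int.cast_add, Int.cast_natCast]
  congr 1
  ring

lemma atomLen_set_eq_sixLengths (f : MCM) (ρ x : ℝ) (n : ℕ) :
    {atomLen f.F ρ x n 0, atomLen f.F ρ x (n + 1) 0, atomLen f.F ρ x n (qDen ρ n),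
      atomLen f.F ρ x n (qDen ρ (n + 1)), atomLen f.F ρ x (n + 1) (qDen ρ n),
      atomLen f.F ρ x n (qDen ρ (n + 1) - qDen ρ n)} =
    sixLengths f.lift (qDen ρ n) (pNum ρ n) (qDen ρ (n + 1)) (pNum ρ (n + 1)) x := by
  rw [sixLengths, f.atomLen_eq_returnLength ρ x n 0 0, f.atomLen_eq_returnLength ρ x (n + 1) 0 0,
    iterateSub_zero_zero, f.atomLen_eq_returnLength ρ x n (qDen ρ n) (pNum ρ n),
    f.atomLen_eq_returnLength ρ x n (qDen ρ (n + 1)) (pNum ρ (n + 1)),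
    f.atomLen_eq_returnLength ρ x (n + 1) (qDen ρ n) (pNum ρ n),
    f.atomLen_eq_returnLength ρ x n (qDen ρ (n + 1) - qDen ρ n) (pNum ρ (n + 1) - pNum ρ n)]

end MCM

/-- The closest returns of even order move points to the right and those of odd order to the left;
reflecting the circle reduces the latter to the former. -/
theorem IsControlled.comparable_convergents {f : CircleDeg1Lift} {Φ : ℝ → ℝ} {V c s A B : ℝ}
    (hf : IsControlled f Φ V) (hmem : f.translationNumber ∈ Ioo (0 : ℝ) 1) (hs : 1 < s)
    (hA : 0 < A) (hB : 0 ≤ B) (hc : PowerLawAt f c s A B) (n : ℕ) :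
    0 < returnLength f (qDen f.translationNumber n) (pNum f.translationNumber n) c ∧
    ∀ x ∈ sixLengths f (qDen f.translationNumber n) (pNum f.translationNumber n)
        (qDen f.translationNumber (n + 1)) (pNum f.translationNumber (n + 1)) c,
      Comparable (gapConst V (B / A) s) x
        (returnLength f (qDen f.translationNumber n) (pNum f.translationNumber n) c) := by
  have hr := isReturnPair_convergents hf.irrational hmem n
  have hr' := isReturnPair_convergents hf.irrational hmem (n + 1)
  rcases n.even_or_odd with hn | hn <;>
    simp only [hn.neg_one_pow, hn.add_one.neg_one_pow, one_mul, neg_mul] at hr hr'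
  · exact ⟨hr.returnLength_pos c,
      fun x hx => hr.comparable_of_mem_sixLengths hf hr' hs hA hB hc hx⟩
  · rw [← translationNumber_reflect] at hr
    rw [← returnLength_reflect, ← sixLengths_reflect]
    exact ⟨hr.returnLength_pos (-c), fun x hx => hr.comparable_of_mem_sixLengths hf.reflect
      (by rwa [translationNumber_reflect, neg_neg, neg_neg]) hs hA hB hc.conj_neg hx⟩

/-- **Proposition: six comparable intervals.** There is `C₄ > 1` depending
only on `f` such that for all `n ≥ 1` the six intervals
`I_n, I_{n+1}, I_n^{q_n}, I_n^{q_{n+1}}, I_{n+1}^{q_n}, I_n^{q_{n+1}-q_n}` (built at a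
chosen critical point `c₀ = f.c i₀`) are pairwise comparable. -/
theorem six_intervals_comparable
    (f : MCM) (ρ : ℝ) (hirr : Irrational ρ) (hmem : ρ ∈ Set.Ioo (0 : ℝ) 1)
    (hrot : HasRotationNumber f.F ρ) (i₀ : Fin f.N) :
    ∃ C₄ : ℝ, 1 < C₄ ∧ ∀ n : ℕ, 1 ≤ n → ∀ I J : ℝ,
      I ∈ ({atomLen f.F ρ (f.c i₀) n 0,
            atomLen f.F ρ (f.c i₀) (n + 1) 0,
            atomLen f.F ρ (f.c i₀) n (qDen ρ n),
            atomLen f.F ρ (f.c i₀) n (qDen ρ (n + 1)),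
            atomLen f.F ρ (f.c i₀) (n + 1) (qDen ρ n),
            atomLen f.F ρ (f.c i₀) n (qDen ρ (n + 1) - qDen ρ n)} : Set ℝ) →
      J ∈ ({atomLen f.F ρ (f.c i₀) n 0,
            atomLen f.F ρ (f.c i₀) (n + 1) 0,
            atomLen f.F ρ (f.c i₀) n (qDen ρ n),
            atomLen f.F ρ (f.c i₀) n (qDen ρ (n + 1)),
            atomLen f.F ρ (f.c i₀) (n + 1) (qDen ρ n),
            atomLen f.F ρ (f.c i₀) n (qDen ρ (n + 1) - qDen ρ n)} : Set ℝ) →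
      C₄⁻¹ ≤ I / J ∧ I / J ≤ C₄ := by
  obtain rfl : f.lift.translationNumber = ρ := MCM.translationNumber_lift hrot
  obtain ⟨Φ, V, hf⟩ := f.exists_isControlled hirr
  obtain ⟨A, B, hA, hB, hc⟩ := f.exists_powerLawAt i₀
  have hC := one_lt_gapConst hf.nonneg (B / A) (f.s i₀)
  have hC₀ := zero_lt_one.trans hC
  refine ⟨_, one_lt_mul_of_lt_of_le hC hC.le, fun n _ I J hI hJ => ?_⟩
  rw [f.atomLen_set_eq_sixLengths] at hI hJ
  obtain ⟨hpos, hcomp⟩ := hf.comparable_convergents hmem (f.s_gt_one i₀) hA hB hc n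
  exact ((hcomp I hI).trans_symm hC₀.le (hcomp J hJ)).inv_le_div_and_div_le
    (mul_pos hC₀ hC₀) ((hcomp J hJ).pos_left hC₀ hpos)
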